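/- Let T be a small theory and let p and q be types of T. Then there exists a countable model of T realizing both p and q; moreover, if T is a decidable AL theory and p and q are decidable types, this model can be chosen decidable. -/

import Mathlib

open FirstOrder FirstOrder.Language

namespace PaperAL

variable {L : FirstOrder.Language.{0, 0}}

/-- Bundled countable-universe models of `T`. -/
abbrev Mdl (T : L.Theory) := Theory.ModelType.{0, 0, 0} T

/-- The complete type of a finite tuple `a` in a structure `M`:
the set of formulas in `n` free variables realized by `a`. -/
def typeOf (M : Type) [L.Structure M] {n : ℕ} (a : Fin n → M) :
    Set (L.Formula (Fin n)) :=
  {φ : L.Formula (Fin n) | φ.Realize a}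

/-- `p` is an (n-)type of the theory `T`: i.e. `p` is realized in some model of `T`. -/
def IsTypeOf (T : L.Theory) {n : ℕ} (p : Set (L.Formula (Fin n))) : Prop :=
  ∃ M : Mdl T, Countable M ∧ ∃ a : Fin n → M, typeOf M a = p

/-- `M` realizes the type `p`. -/
def Realizes (M : Type) [L.Structure M] {n : ℕ} (p : Set (L.Formula (Fin n))) : Prop :=
  ∃ a : Fin n → M, typeOf M a = p

/-- A theory is small if, for each `n`, its set of `n`-types is countable. -/
def IsSmall (T : L.Theory) : Prop :=
  ∀ n : ℕ, {p : Set (L.Formula (Fin n)) | IsTypeOf T p}.Countable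

/-- Two tuples (possibly in different structures) have the same complete type. -/
def SameType {M N : Type} [L.Structure M] [L.Structure N] {n : ℕ}
    (a : Fin n → M) (b : Fin n → N) : Prop :=
  ∀ φ : L.Formula (Fin n), φ.Realize a ↔ φ.Realize b

/-- `M` with the distinguished tuple `a` is a prime model of `Th(M, a)`:
it elementarily embeds, respecting the tuple, into every model of `T` with a
tuple of the same complete type. -/
def IsPrimeOver (T : L.Theory) (M : Type) [L.Structure M] {n : ℕ} (a : Fin n → M) : Prop :=
  M ⊨ T ∧ ∀ N : Mdl T, Countable N → ∀ b : Fin n → N, SameType (L := L) a b →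
    ∃ f : M ↪ₑ[L] N, f ∘ a = b

/-- `M` is a `p`-prime model of `T`. -/
def IsPPrime (T : L.Theory) {n : ℕ} (p : Set (L.Formula (Fin n)))
    (M : Type) [L.Structure M] : Prop :=
  ∃ a : Fin n → M, typeOf M a = p ∧ IsPrimeOver T M a

/-- `M` is an almost prime model of `T`, i.e. `p`-prime for some type `p`. -/
def AlmostPrime (T : L.Theory) (M : Type) [L.Structure M] : Prop :=
  ∃ (n : ℕ) (a : Fin n → M), IsPrimeOver T M a

/-- `M` is a prime model of `T`. -/
def IsPrimeModel (T : L.Theory) (M : Type) [L.Structure M] : Prop :=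
  M ⊨ T ∧ ∀ N : Mdl T, Countable N → Nonempty (M ↪ₑ[L] N)

/-- `S` is an elementary chain of elementary substructures of `M` whose union is `M`. -/
def IsElemChainUnion (M : Type) [L.Structure M]
    (S : ℕ → L.ElementarySubstructure M) : Prop :=
  Monotone S ∧ ∀ x : M, ∃ i, x ∈ S i

/-- `M` is a limit model of `T`: the union of an elementary chain of pairwise isomorphic
almost prime models, but not itself almost prime. -/
def IsLimit (T : L.Theory) (M : Type) [L.Structure M] : Prop :=
  (∃ S : ℕ → L.ElementarySubstructure M, IsElemChainUnion M S ∧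
      (∀ i, AlmostPrime T (S i)) ∧ ∀ i j, Nonempty ((S i) ≃[L] (S j))) ∧
    ¬ AlmostPrime T M

/-- `M` is a `p`-limit model of `T`: the union of an elementary chain of `p`-prime models,
but not itself `p`-prime. -/
def IsPLimit (T : L.Theory) {n : ℕ} (p : Set (L.Formula (Fin n)))
    (M : Type) [L.Structure M] : Prop :=
  (∃ S : ℕ → L.ElementarySubstructure M, IsElemChainUnion M S ∧
      ∀ i, IsPPrime T p (S i)) ∧
    ¬ IsPPrime T p M

/-- `M` is a weakly limit model of `T`: the union of an elementary chain of almost prime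
models. -/
def IsWeaklyLimit (T : L.Theory) (M : Type) [L.Structure M] : Prop :=
  ∃ S : ℕ → L.ElementarySubstructure M, IsElemChainUnion M S ∧ ∀ i, AlmostPrime T (S i)

/-- `M` is a (countably) saturated model of `T`: every type over a finite tuple of `M`
consistent with the theory of that tuple is realized in `M`. -/
def IsSaturatedModel (T : L.Theory) (M : Type) [L.Structure M] : Prop :=
  M ⊨ T ∧ ∀ (n : ℕ) (a : Fin n → M) (N : Mdl T), Countable N →
    ∀ (b : Fin n → N) (c : N), SameType (L := L) a b →
      ∃ d : M, SameType (L := L) (Fin.snoc a d) (Fin.snoc b c)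

/-- `T` is an AL theory: a complete small theory each of whose countable non-saturated
models is either almost prime or limit. -/
def IsALTheory (T : L.Theory) : Prop :=
  T.IsComplete ∧ IsSmall T ∧
    ∀ M : Mdl T, Countable M → ¬ IsSaturatedModel T M →
      AlmostPrime T M ∨ IsLimit T M

/-- A type `p` of `T` is principal if it is generated by a single formula. -/
def IsPrincipalType (T : L.Theory) {n : ℕ} (p : Set (L.Formula (Fin n))) : Prop :=
  ∃ φ ∈ p, ∀ M : Mdl T, Countable M → ∀ a : Fin n → M,
    φ.Realize a → typeOf M a = p

/-- A type `p` of `T` is powerful if every model of `T` realizing `p` realizes every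
type of `T`. -/
def IsPowerfulType (T : L.Theory) {n : ℕ} (p : Set (L.Formula (Fin n))) : Prop :=
  ∀ M : Mdl T, Countable M → Realizes M p →
    ∀ (m : ℕ) (q : Set (L.Formula (Fin m))), IsTypeOf T q → Realizes M q

section Computability

variable [∀ k, Encodable (L.Functions k)] [∀ k, Encodable (L.Relations k)]

/-- A canonical injective Gödel numbering of first-order formulas over an
encodable language. -/
def fmlCode {α : Type} [Encodable α] {n : ℕ} (φ : L.BoundedFormula α n) : ℕ :=
  Encodable.encode φ.listEncode

/-- A structure is decidable if its elementary diagram is computable: under some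
surjective enumeration of its universe, the set of codes of true first-order formulas
with parameters is computable. -/
def DecidableModel (M : Type) [L.Structure M] : Prop :=
  ∃ g : ℕ → M, Function.Surjective g ∧
    ComputablePred (fun c : ℕ => ∃ φ : L.Formula ℕ, fmlCode φ = c ∧ φ.Realize g)

/-- A structure is computable if its atomic diagram is computable. -/
def ComputableModel (M : Type) [L.Structure M] : Prop :=
  ∃ g : ℕ → M, Function.Surjective g ∧
    ComputablePred (fun c : ℕ =>
      ∃ φ : L.Formula ℕ, φ.IsAtomic ∧ fmlCode φ = c ∧ φ.Realize g)

/-- A theory is decidable if it is a computable set of sentences. -/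
def DecidableTheory (T : L.Theory) : Prop :=
  ComputablePred (fun c : ℕ => ∃ φ : L.Sentence, fmlCode φ = c ∧ φ ∈ T)

/-- A type is decidable if it is a computable set of formulas. -/
def DecidableType {n : ℕ} (p : Set (L.Formula (Fin n))) : Prop :=
  ComputablePred (fun c : ℕ => ∃ φ : L.Formula (Fin n), fmlCode φ = c ∧ φ ∈ p)

end Computability


/-- `DecidableModel` with the encodability data of the language given explicitly. -/
def DecidableModel' (L : FirstOrder.Language.{0, 0})
    (i1 : ∀ k, Encodable (L.Functions k)) (i2 : ∀ k, Encodable (L.Relations k))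
    (M : Type) (iM : L.Structure M) : Prop :=
  @DecidableModel L i1 i2 M iM

/-- `ComputableModel` with the encodability data of the language given explicitly. -/
def ComputableModel' (L : FirstOrder.Language.{0, 0})
    (i1 : ∀ k, Encodable (L.Functions k)) (i2 : ∀ k, Encodable (L.Relations k))
    (M : Type) (iM : L.Structure M) : Prop :=
  @ComputableModel L i1 i2 M iM

/-- `T` has exactly one countable model up to isomorphism. -/
def Aleph0Categorical {L : FirstOrder.Language.{0, 0}} (T : L.Theory) : Prop :=
  (∃ M : Mdl T, Countable M) ∧
    ∀ M N : Mdl T, Countable M → Countable N → Nonempty (M ≃[L] N)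

/-- `T` has exactly one model of cardinality `ℵ₁` up to isomorphism. -/
def Aleph1Categorical {L : FirstOrder.Language.{0, 0}} (T : L.Theory) : Prop :=
  (∃ M : Mdl T, Cardinal.mk M = Cardinal.aleph 1) ∧
    ∀ M N : Mdl T, Cardinal.mk M = Cardinal.aleph 1 → Cardinal.mk N = Cardinal.aleph 1 →
      Nonempty (M ≃[L] N)

variable {L : FirstOrder.Language.{0, 0}}
  [∀ k, Encodable (L.Functions k)] [∀ k, Encodable (L.Relations k)]

/-!
For the decidable model, the finite parts of the two types are enumerated as a consistent partial
type `Γ` over the concatenated variables. If every formula consistent with `Γ` had two consistent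
and contradictory strengthenings, one could escape, one strengthening at a time, every complete type
of a countable list; by smallness some formula `χ` therefore isolates a complete type `r` above `Γ`.
As `T` is complete, a formula is inconsistent with a finite part of `Γ` if and only if `p` contains
the corresponding universal closure; so `r` is decided by searching for an inconsistency of
`Γ ∪ {χ}` with `φ` or with `¬φ`. A Henkin construction over `r`, where consistency is read off
from `r`, then gives the model.

Which numbers are codes of formulas has to be decided as well: a list `l` of symbols is a formula if
and only if the decidable type `p` contains the tautology `∀ … ∀ (⊥ → l)`.
-/

section Compactness

variable {L : FirstOrder.Language.{0, 0}} {T : L.Theory} {α : Type}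

/-- `φ` is realized, together with all the formulas of the partial type `Γ`, in a model of `T`. -/
def ConsistentWith (T : L.Theory) (Γ : Set (L.Formula α)) (φ : L.Formula α) : Prop :=
  ∃ M : Mdl T, ∃ v : α → M, (∀ γ ∈ Γ, γ.Realize v) ∧ φ.Realize v

variable [Countable α] [Countable L.Symbols]

theorem exists_countable_realize_iff (M : Mdl T) (v : α → M) :
    ∃ N : Mdl T, Countable N ∧ ∃ w : α → N, ∀ φ : L.Formula α, φ.Realize w ↔ φ.Realize v := by
  by_cases hM : Countable M
  · exact ⟨M, hM, v, fun _ => Iff.rfl⟩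
  have hcard : Cardinal.aleph0 ≤ Cardinal.mk M :=
    (not_le.1 (mt Cardinal.mk_le_aleph0_iff.1 hM)).le
  obtain ⟨S, hvS, hS⟩ := exists_elementarySubstructure_card_eq L (Set.range v)
    Cardinal.aleph0.{0} le_rfl
    (by simpa using Cardinal.mk_le_aleph0_iff.2 (Set.countable_range v).to_subtype)
    (by
      rw [Cardinal.lift_id, Cardinal.lift_id]
      exact Cardinal.mk_le_aleph0_iff.2 ‹Countable L.Symbols›)
    (by simpa using hcard)
  refine ⟨⟨S⟩, Cardinal.mk_le_aleph0_iff.1 (by simpa using hS.le),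
    fun i => ⟨v i, hvS ⟨i, rfl⟩⟩, fun φ => ?_⟩
  exact (S.subtype.map_formula φ _).symm

theorem exists_countable_realize_of_finset {Γ : Set (L.Formula α)}
    (h : ∀ F : Finset (L.Formula α), ↑F ⊆ Γ → ∃ M : Mdl T, ∃ v : α → M, ∀ φ ∈ F, φ.Realize v) :
    ∃ M : Mdl T, Countable M ∧ ∃ v : α → M, ∀ φ ∈ Γ, φ.Realize v := by
  classical
  have hsat : ((L.lhomWithConstants α).onTheory T ∪
      Formula.equivSentence '' Γ : L[[α]].Theory).IsSatisfiable := by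
    rw [Theory.isSatisfiable_iff_isFinitelySatisfiable]
    intro T₀ hT₀
    obtain ⟨M, v, hv⟩ := h ((T₀.image Formula.equivSentence.symm).filter (· ∈ Γ))
      fun φ hφ => (Finset.mem_filter.1 hφ).2
    let _ := constantsOn.structure v
    have : M ⊨ (T₀ : L[[α]].Theory) := by
      refine ⟨fun σ hσ => ?_⟩
      rcases hT₀ hσ with hT | ⟨φ, hφ, rfl⟩
      · exact ((LHom.onTheory_model (L.lhomWithConstants α) T).2 inferInstance).realize_of_mem _ hT
      · refine (Formula.realize_equivSentence_symm M (Formula.equivSentence φ) v).1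
          (hv _ (Finset.mem_filter.2 ⟨Finset.mem_image_of_mem _ hσ, ?_⟩))
        rwa [Equiv.symm_apply_apply]
    exact Theory.Model.isSatisfiable M
  obtain ⟨M⟩ := hsat
  let _ : L.Structure M := (L.lhomWithConstants α).reduct M
  have _ : (L.lhomWithConstants α).IsExpansionOn M := LHom.isExpansionOn_reduct _ _
  have _ : M ⊨ T := (LHom.onTheory_model (L.lhomWithConstants α) T).1
    (M.is_model.mono Set.subset_union_left)
  obtain ⟨N, hN, w, hw⟩ := exists_countable_realize_iff (T := T) ⟨M⟩
    (fun a : α => ((L.con a : L[[α]].Constants) : M))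
  refine ⟨N, hN, w, fun φ hφ => (hw φ).2 ((Formula.realize_equivSentence M φ).1 ?_)⟩
  exact M.is_model.realize_of_mem _ (.inr ⟨φ, hφ, rfl⟩)

theorem exists_countable_realize_of_antitone {Γ : Set (L.Formula α)} {θ : ℕ → L.Formula α}
    (hanti : ∀ s (M : Mdl T) (v : α → M), (θ (s + 1)).Realize v → (θ s).Realize v)
    (hθ : ∀ s, ConsistentWith T Γ (θ s)) :
    ∃ M : Mdl T, Countable M ∧ ∃ v : α → M,
      (∀ γ ∈ Γ, γ.Realize v) ∧ ∀ s, (θ s).Realize v := by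
  classical
  have hle : ∀ {s t}, s ≤ t → ∀ (M : Mdl T) (v : α → M), (θ t).Realize v → (θ s).Realize v := by
    intro s t hst M v
    induction hst with
    | refl => exact id
    | step _ ih => exact fun h => ih (hanti _ M v h)
  obtain ⟨M, hM, v, hv⟩ := exists_countable_realize_of_finset (T := T) (Γ := Γ ∪ Set.range θ)
    fun F hF => by
      have hidx : ∀ φ : F, ∃ s, φ.1 ∈ Γ ∨ θ s = φ.1 := fun φ =>
        (hF φ.2).elim (fun h => ⟨0, .inl h⟩) fun ⟨s, hs⟩ => ⟨s, .inr hs⟩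
      choose s hs using hidx
      obtain ⟨M, v, hΓ, hmax⟩ := hθ (Finset.univ.sup s)
      refine ⟨M, v, fun φ hφ => (hs ⟨φ, hφ⟩).elim (hΓ φ) fun h => ?_⟩
      have hφs := hle (Finset.le_sup (Finset.mem_univ ⟨φ, hφ⟩)) M v hmax
      rwa [h] at hφs
  exact ⟨M, hM, v, fun γ hγ => hv γ (.inl hγ), fun s => hv _ (.inr ⟨s, rfl⟩)⟩

end Compactness

section Types

variable {L : FirstOrder.Language.{0, 0}} {T : L.Theory} {n m : ℕ}

theorem not_mem_iff_of_isTypeOf {p : Set (L.Formula (Fin n))} (hp : IsTypeOf T p)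
    {φ : L.Formula (Fin n)} : φ.not ∈ p ↔ φ ∉ p := by
  obtain ⟨M, -, a, rfl⟩ := hp
  exact Formula.realize_not

theorem typeOf_eq_of_forall_realize {p : Set (L.Formula (Fin n))} (hp : IsTypeOf T p)
    {M : Type} [L.Structure M] {a : Fin n → M} (h : ∀ φ ∈ p, φ.Realize a) : typeOf M a = p := by
  refine Set.Subset.antisymm (fun φ hφ => ?_) h
  by_contra hnot
  exact Formula.realize_not.1 (h _ ((not_mem_iff_of_isTypeOf hp).2 hnot)) hφ

theorem Realizes.of_relabel {N : ℕ} {M : Type} [L.Structure M]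
    {r : Set (L.Formula (Fin N))} (hr : Realizes M r) {p : Set (L.Formula (Fin n))}
    (hp : IsTypeOf T p) {f : Fin n → Fin N} (hpr : ∀ φ ∈ p, φ.relabel f ∈ r) : Realizes M p := by
  obtain ⟨a, rfl⟩ := hr
  exact ⟨a ∘ f, typeOf_eq_of_forall_realize hp fun φ hφ => Formula.realize_relabel.1 (hpr φ hφ)⟩

theorem exists_realize_of_isComplete (hT : T.IsComplete) {φ : L.Formula (Fin n)} {M : Mdl T}
    {a : Fin n → M} (h : φ.Realize a) (N : Mdl T) : ∃ b : Fin n → N, φ.Realize b := by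
  let σ : L.Sentence := (φ.relabel Sum.inr : L.Formula (Empty ⊕ Fin n)).iExs (Fin n)
  have hσ : ∀ K : Mdl T, K ⊨ σ ↔ ∃ b : Fin n → K, φ.Realize b := fun K =>
    Formula.realize_iExs.trans (exists_congr fun b => Formula.realize_relabel)
  exact (hσ N).1
    ((hT.realize_sentence_iff σ N).2 ((hT.realize_sentence_iff σ M).1 ((hσ M).2 ⟨a, h⟩)))

/-- The conjunction of the first `s` formulas of a sequence. -/
def initialConj {α : Type} (e : ℕ → L.Formula α) : ℕ → L.Formula α
  | 0 => ⊤
  | s + 1 => initialConj e s ⊓ e s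

theorem realize_initialConj {α M : Type} [L.Structure M] {e : ℕ → L.Formula α} {s : ℕ}
    {v : α → M} : (initialConj e s).Realize v ↔ ∀ i < s, (e i).Realize v := by
  induction s with
  | zero =>
    simp only [initialConj, Formula.realize_top, Nat.not_lt_zero, false_imp_iff, implies_true]
  | succ s ih => rw [initialConj, Formula.realize_inf, ih, Nat.forall_lt_succ_right]

theorem countable_formula {α : Type} [Countable α] [Countable L.Symbols] :
    Countable (L.Formula α) := by
  have hcard : Cardinal.mk (Σ k, L.BoundedFormula α k) ≤ Cardinal.aleph0 := by
    refine BoundedFormula.card_le.trans (max_le le_rfl ?_)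
    rw [Cardinal.lift_id, Cardinal.lift_id]
    exact Cardinal.add_le_aleph0.2
      ⟨Cardinal.mk_le_aleph0, Cardinal.mk_le_aleph0_iff.2 ‹Countable L.Symbols›⟩
  have := Cardinal.mk_le_aleph0_iff.1 hcard
  exact (sigma_mk_injective (β := L.BoundedFormula α) (i := 0)).countable

theorem exists_range_eq_of_isTypeOf [Countable L.Symbols] {p : Set (L.Formula (Fin n))}
    (hp : IsTypeOf T p) : ∃ e : ℕ → L.Formula (Fin n), Set.range e = p := by
  have := countable_formula (L := L) (α := Fin n)
  have hne : p.Nonempty := by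
    obtain ⟨M, -, a, rfl⟩ := hp
    exact ⟨⊤, Formula.realize_top.2 trivial⟩
  obtain ⟨e, he⟩ := p.to_countable.exists_eq_range hne
  exact ⟨e, he.symm⟩

theorem exists_countable_realizes_and_realizes [Countable L.Symbols] (hT : T.IsComplete)
    {p : Set (L.Formula (Fin n))} {q : Set (L.Formula (Fin m))}
    (hp : IsTypeOf T p) (hq : IsTypeOf T q) :
    ∃ M : Mdl T, Countable M ∧ Realizes M p ∧ Realizes M q := by
  obtain ⟨e, rfl⟩ := exists_range_eq_of_isTypeOf hq
  obtain ⟨M, hM, v, hpv, hqv⟩ := exists_countable_realize_of_antitone (T := T)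
    (Γ := (fun φ : L.Formula (Fin n) => φ.relabel (Sum.inl : Fin n → Fin n ⊕ Fin m)) '' p)
    (θ := fun s => (initialConj e s).relabel Sum.inr)
    (fun s M v h =>
      Formula.realize_relabel.2 (Formula.realize_inf.1 (Formula.realize_relabel.1 h)).1)
    fun s => by
      obtain ⟨M, -, a, rfl⟩ := hp
      obtain ⟨N, -, b, hb⟩ := id hq
      have hN : (initialConj e s).Realize b :=
        realize_initialConj.2 fun i _ => (hb.symm ▸ ⟨i, rfl⟩ : e i ∈ typeOf N b)
      obtain ⟨b', hb'⟩ := exists_realize_of_isComplete hT hN M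
      refine ⟨M, Sum.elim a b', ?_, Formula.realize_relabel.2 hb'⟩
      rintro _ ⟨φ, hφ, rfl⟩
      exact Formula.realize_relabel.2 hφ
  refine ⟨M, hM,
    ⟨v ∘ Sum.inl, typeOf_eq_of_forall_realize hp fun φ hφ =>
      Formula.realize_relabel.1 (hpv _ ⟨φ, hφ, rfl⟩)⟩,
    ⟨v ∘ Sum.inr, typeOf_eq_of_forall_realize hq ?_⟩⟩
  rintro _ ⟨i, rfl⟩
  exact (realize_initialConj.1 (Formula.realize_relabel.1 (hqv (i + 1)))) i i.lt_succ_self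

/-- `χ` isolates a complete type of `T` above the partial type `Γ`: it is consistent with `Γ` and
decides every formula modulo `Γ`. -/
def IsolatesOver (T : L.Theory) {α : Type} (Γ : Set (L.Formula α)) (χ : L.Formula α) : Prop :=
  ConsistentWith T Γ χ ∧
    ∀ φ, ¬ (ConsistentWith T Γ (χ ⊓ φ) ∧ ConsistentWith T Γ (χ ⊓ φ.not))

theorem exists_isolatesOver [Countable L.Symbols] (hT : IsSmall T) {Γ : Set (L.Formula (Fin n))}
    (hΓ : ConsistentWith T Γ ⊤) : ∃ χ, IsolatesOver T Γ χ := by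
  by_contra hcon
  have hsplit : ∀ χ, ConsistentWith T Γ χ →
      ∃ φ, ConsistentWith T Γ (χ ⊓ φ) ∧ ConsistentWith T Γ (χ ⊓ φ.not) := by
    intro χ hχ
    by_contra! hχφ
    exact hcon ⟨χ, hχ, fun φ h => hχφ φ h.1 h.2⟩
  obtain ⟨r, hr⟩ := (hT n).exists_eq_range (by
    obtain ⟨M, v, -⟩ := hΓ
    obtain ⟨N, hN, w, -⟩ := exists_countable_realize_iff M v
    exact ⟨typeOf N w, N, hN, w, rfl⟩)
  have hr_type : ∀ s, IsTypeOf T (r s) := fun s =>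
    (hr ▸ Set.mem_range_self s : r s ∈ {p | IsTypeOf T p})
  -- Diagonalization: the `s`-th step excludes the `s`-th complete type.
  have hstep : ∀ (s : ℕ) (χ : {χ // ConsistentWith T Γ χ}),
      ∃ ψ, ψ ∉ r s ∧ ConsistentWith T Γ (χ ⊓ ψ) := by
    rintro s ⟨χ, hχ⟩
    obtain ⟨φ, hφ, hφ'⟩ := hsplit χ hχ
    by_cases hmem : φ ∈ r s
    · exact ⟨φ.not, fun h => (not_mem_iff_of_isTypeOf (hr_type s)).1 h hmem, hφ'⟩
    · exact ⟨φ, hmem, hφ⟩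
  choose ψ hψ hψ_con using hstep
  let χ : ℕ → {χ // ConsistentWith T Γ χ} := fun s =>
    s.rec ⟨⊤, hΓ⟩ fun s χ => ⟨χ ⊓ ψ s χ, hψ_con s χ⟩
  obtain ⟨M, hM, v, -, hv⟩ := exists_countable_realize_of_antitone (T := T) (Γ := Γ)
    (θ := fun s => (χ s).1) (fun s M v h => (Formula.realize_inf.1 h).1) fun s => (χ s).2
  obtain ⟨s, hs⟩ : typeOf M v ∈ Set.range r := hr ▸ ⟨M, hM, v, rfl⟩
  exact hψ s (χ s) (hs ▸ (Formula.realize_inf.1 (hv (s + 1))).2)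

end Types

section Symbols

/-- Symbols of raw terms: free variables, bound variables, and function symbols, the latter given
by their arity and code. -/
abbrev TermSymbol := (ℕ ⊕ ℕ) ⊕ (ℕ × ℕ)

/-- Symbols of raw formulas: terms with the number of bound variables in scope, relation symbols
given by their arity and code, and numbers. They mirror the symbols of `BoundedFormula.listEncode`,
where `0` stands for `→`, `1` for `∀`, and `k + 2` for `⊥` in the scope of `k` bound variables. -/
abbrev FormulaSymbol := (ℕ × List TermSymbol) ⊕ ((ℕ × ℕ) ⊕ ℕ)

/-- The symbol `j` of a raw formula. -/
abbrev numSymbol (j : ℕ) : FormulaSymbol := .inr (.inr j)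

/-- Whether a symbol is a relation symbol; only in this case does a number following it in a raw
formula count the bound variables in scope. -/
def isRelSymbol : FormulaSymbol → Bool
  | .inr (.inl _) => true
  | _ => false

/-- Applies `v` to the variables and `d` to the numbers of bound variables in a symbol; `b` tells
whether the preceding symbol is a relation symbol. -/
def mapSymbol (v : ℕ ⊕ ℕ → ℕ ⊕ ℕ) (d : ℕ → ℕ) (b : Bool) : FormulaSymbol → FormulaSymbol
  | .inl (k, t) => .inl (d k, t.map (Sum.map v id))
  | .inr (.inl R) => .inr (.inl R)
  | .inr (.inr j) => numSymbol (bif b then d j else if j < 2 then j else d (j - 2) + 2)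

/-- Applies `v` to the variables and `d` to the numbers of bound variables in a list of symbols; `b`
tells whether the list is preceded by a relation symbol. -/
def mapRaw (v : ℕ ⊕ ℕ → ℕ ⊕ ℕ) (d : ℕ → ℕ) : Bool → List FormulaSymbol → List FormulaSymbol
  | _, [] => []
  | b, x :: l => mapSymbol v d b x :: mapRaw v d (isRelSymbol x) l

theorem isRelSymbol_mapSymbol (v : ℕ ⊕ ℕ → ℕ ⊕ ℕ) (d : ℕ → ℕ) (b : Bool) (x : FormulaSymbol) :
    isRelSymbol (mapSymbol v d b x) = isRelSymbol x := by
  rcases x with _ | _ | _ <;> rfl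

theorem mapRaw_mapRaw (v v' : ℕ ⊕ ℕ → ℕ ⊕ ℕ) (d d' : ℕ → ℕ) (b : Bool) (l : List FormulaSymbol) :
    mapRaw v' d' b (mapRaw v d b l) = mapRaw (v' ∘ v) (d' ∘ d) b l := by
  induction l generalizing b with
  | nil => rfl
  | cons x l ih =>
    simp only [mapRaw, isRelSymbol_mapSymbol, ih, List.cons.injEq, and_true]
    rcases x with ⟨k, t⟩ | R | j
    · simp [mapSymbol, Function.comp_def]
    · rfl
    · by_cases hj : j < 2 <;> cases b <;> simp [mapSymbol, hj]

theorem mapRaw_eq_self {v : ℕ ⊕ ℕ → ℕ ⊕ ℕ} {l : List FormulaSymbol}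
    (hv : ∀ k t, .inl (k, t) ∈ l → ∀ x, .inl x ∈ t → v x = x) {d : ℕ → ℕ} (hd : ∀ k, d k = k)
    (b : Bool) : mapRaw v d b l = l := by
  induction l generalizing b with
  | nil => rfl
  | cons x l ih =>
    have htail := ih (fun k t hl => hv k t (List.mem_cons_of_mem _ hl)) (isRelSymbol x)
    rw [mapRaw, htail]
    rcases x with ⟨k, t⟩ | R | j
    · have ht : t.map (Sum.map v id) = t := by
        refine (List.map_congr_left fun y hy => ?_).trans t.map_id
        rcases y with x | f
        · exact congrArg Sum.inl (hv k t List.mem_cons_self x hy)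
        · rfl
      simp only [mapSymbol, hd, ht]
    · rfl
    · by_cases hj : j < 2 <;> cases b <;> simp [mapSymbol, hd, hj]
      omega

theorem encode_lt_encode_of_mem {A : Type} [Encodable A] {a : A} {l : List A} (h : a ∈ l) :
    Encodable.encode a < Encodable.encode l := by
  induction l with
  | nil => cases h
  | cons b l ih =>
    rw [Encodable.encode_list_cons, Nat.lt_succ_iff]
    rcases List.mem_cons.1 h with rfl | hl
    · exact Nat.left_le_pair _ _
    · exact (ih hl).le.trans (Nat.right_le_pair _ _)

theorem lt_encode_of_mem {l : List FormulaSymbol} {k : ℕ} {t : List TermSymbol}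
    (ht : .inl (k, t) ∈ l) {j : ℕ} (hj : .inl (.inl j) ∈ t) : j < Encodable.encode l := by
  have h₁ := encode_lt_encode_of_mem ht
  have h₂ := encode_lt_encode_of_mem hj
  have h₃ := Nat.right_le_pair k (Encodable.encode t)
  simp only [Encodable.encode_inl, Encodable.encode_prod_val, Encodable.encode_nat] at h₁ h₂
  omega

end Symbols

section RawTerm

variable {L : FirstOrder.Language.{0, 0}} [∀ k, Encodable (L.Functions k)]
  {α β : Type} [Encodable α] [Encodable β] {k : ℕ}

/-- The raw symbol of a term symbol, with the same code. -/
def rawTermSymbol : (α ⊕ Fin k) ⊕ (Σ i, L.Functions i) → TermSymbol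
  | .inl (.inl a) => .inl (.inl (Encodable.encode a))
  | .inl (.inr i) => .inl (.inr i)
  | .inr f => .inr (f.1, Encodable.encode f.2)

/-- The list of raw symbols of a term. -/
def rawTerm (t : L.Term (α ⊕ Fin k)) : List TermSymbol := t.listEncode.map rawTermSymbol

theorem encode_list_map {A B : Type} [Encodable A] [Encodable B] {f : A → B}
    (hf : ∀ a, Encodable.encode (f a) = Encodable.encode a) (l : List A) :
    Encodable.encode (l.map f) = Encodable.encode l := by
  induction l with
  | nil => rfl
  | cons a l ih => simp only [List.map_cons, Encodable.encode_list_cons, hf, ih]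

theorem encode_rawTermSymbol (x : (α ⊕ Fin k) ⊕ (Σ i, L.Functions i)) :
    Encodable.encode (rawTermSymbol x) = Encodable.encode x := by
  rcases x with (a | i) | ⟨i, f⟩ <;> rfl

theorem encode_rawTerm (t : L.Term (α ⊕ Fin k)) :
    Encodable.encode (rawTerm t) = Encodable.encode t :=
  encode_list_map encode_rawTermSymbol _

@[simp]
theorem rawTerm_func {l : ℕ} (f : L.Functions l) (ts : Fin l → L.Term (α ⊕ Fin k)) :
    rawTerm (Term.func f ts) =
      .inr (l, Encodable.encode f) :: (List.finRange l).flatMap fun i => rawTerm (ts i) := by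
  simp [rawTerm, Term.listEncode, rawTermSymbol, List.map_flatMap]

theorem rawTerm_relabel {m : ℕ} {v : ℕ ⊕ ℕ → ℕ ⊕ ℕ} {w : α ⊕ Fin k → β ⊕ Fin m}
    (hv : ∀ x, v (x.map Encodable.encode Fin.val) = (w x).map Encodable.encode Fin.val)
    (t : L.Term (α ⊕ Fin k)) :
    rawTerm (t.relabel w) = (rawTerm t).map (Sum.map v id) := by
  have rawTerm_var : ∀ {α : Type} [Encodable α] {k : ℕ} (x : α ⊕ Fin k),
      rawTerm (Term.var x : L.Term (α ⊕ Fin k)) = [.inl (x.map Encodable.encode Fin.val)] := by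
    rintro α _ k (a | i) <;> rfl
  induction t with
  | var x => simp only [Term.relabel, rawTerm_var, List.map_cons, Sum.map_inl, hv, List.map_nil]
  | func f ts ih =>
    simp only [Term.relabel, rawTerm_func, ih, List.map_cons, Sum.map_inr, id_eq, List.map_flatMap]

end RawTerm

section RawForm

variable {α β : Type} [Encodable α] [Encodable β] {k : ℕ}

/-- The raw symbol of a formula symbol, with the same code. -/
def rawSymbol : (Σ k, L.Term (α ⊕ Fin k)) ⊕ ((Σ n, L.Relations n) ⊕ ℕ) → FormulaSymbol
  | .inl t => .inl (t.1, rawTerm t.2)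
  | .inr (.inl R) => .inr (.inl (R.1, Encodable.encode R.2))
  | .inr (.inr j) => numSymbol j

/-- The list of raw symbols of a formula. Its type depends neither on the language nor on the set
of variables, and it has the same code as the formula, so computations on codes of formulas can be
carried out on raw forms. -/
def raw (φ : L.BoundedFormula α k) : List FormulaSymbol := φ.listEncode.map rawSymbol

theorem encode_rawSymbol (x : (Σ k, L.Term (α ⊕ Fin k)) ⊕ ((Σ n, L.Relations n) ⊕ ℕ)) :
    Encodable.encode (rawSymbol x) = Encodable.encode x := by
  rcases x with ⟨k, t⟩ | ⟨n, R⟩ | j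
  · simp only [rawSymbol, Encodable.encode_inl, Encodable.encode_prod_val, encode_rawTerm,
      Encodable.encode_sigma_val, Encodable.encode_nat]
  · rfl
  · rfl

theorem encode_raw (φ : L.BoundedFormula α k) : Encodable.encode (raw φ) = fmlCode φ :=
  encode_list_map encode_rawSymbol _

theorem raw_injective : Function.Injective (raw : L.BoundedFormula α k → List FormulaSymbol) := by
  intro φ ψ h
  have hlist : φ.listEncode = ψ.listEncode :=
    Encodable.encode_injective (by
      simpa only [encode_raw, fmlCode] using congrArg Encodable.encode h)
  have hφ := BoundedFormula.listDecode_encode_list (L := L) (α := α) [⟨k, φ⟩]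
  have hψ := BoundedFormula.listDecode_encode_list (L := L) (α := α) [⟨k, ψ⟩]
  simp only [List.flatMap_cons, List.flatMap_nil, List.append_nil] at hφ hψ
  rw [hlist, hψ] at hφ
  simpa using hφ.symm

theorem fmlCode_injective : Function.Injective (fmlCode : L.BoundedFormula α k → ℕ) := by
  intro φ ψ h
  rw [← encode_raw, ← encode_raw] at h
  exact raw_injective (Encodable.encode_injective h)

@[simp]
theorem raw_falsum : raw (BoundedFormula.falsum : L.BoundedFormula α k) = [numSymbol (k + 2)] := rfl

@[simp]
theorem raw_equal (t s : L.Term (α ⊕ Fin k)) :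
    raw (BoundedFormula.equal t s) = [.inl (k, rawTerm t), .inl (k, rawTerm s)] := rfl

@[simp]
theorem raw_rel {l : ℕ} (R : L.Relations l) (ts : Fin l → L.Term (α ⊕ Fin k)) :
    raw (BoundedFormula.rel R ts) = .inr (.inl (l, Encodable.encode R)) :: numSymbol k ::
      (List.finRange l).map fun i => .inl (k, rawTerm (ts i)) := by
  simp [raw, BoundedFormula.listEncode, rawSymbol]

@[simp]
theorem raw_imp (φ ψ : L.BoundedFormula α k) :
    raw (φ.imp ψ) = numSymbol 0 :: (raw φ ++ raw ψ) := by
  simp [raw, BoundedFormula.listEncode, rawSymbol]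

@[simp]
theorem raw_all (φ : L.BoundedFormula α (k + 1)) : raw φ.all = numSymbol 1 :: raw φ := rfl

theorem raw_not (φ : L.BoundedFormula α k) :
    raw φ.not = numSymbol 0 :: (raw φ ++ [numSymbol (k + 2)]) :=
  raw_imp φ ⊥

theorem raw_alls (φ : L.BoundedFormula α k) :
    raw φ.alls = List.replicate k (numSymbol 1) ++ raw φ := by
  induction k with
  | zero => rfl
  | succ k ih =>
    rw [BoundedFormula.alls, ih, raw_all, List.replicate_succ', List.append_assoc,
      List.singleton_append]

theorem raw_castLE {m : ℕ} (h : k = m) (φ : L.BoundedFormula α k) :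
    raw (φ.castLE h.le) = raw φ := by
  subst h
  rw [BoundedFormula.castLE_rfl]

/-- Replaces the variables of a formula: in the scope of `j` bound variables, `w j` is applied to
the variables and the image is in the scope of `g j` bound variables. This covers
`BoundedFormula.relabel`, and also the replacement of bound variables by free ones. -/
def mapVars {g : ℕ → ℕ} (hg : ∀ j, g (j + 1) ≤ g j + 1) (w : ∀ j, α ⊕ Fin j → β ⊕ Fin (g j))
    (φ : L.BoundedFormula α k) : L.BoundedFormula β (g k) :=
  φ.mapTermRel (fun j t => t.relabel (w j)) (fun _ => id) fun j => BoundedFormula.castLE (hg j)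

theorem mapRaw_false_map_inl_append (v : ℕ ⊕ ℕ → ℕ ⊕ ℕ) (d : ℕ → ℕ)
    (l : List (ℕ × List TermSymbol)) (rest : List FormulaSymbol) :
    mapRaw v d false (l.map .inl ++ rest) =
      l.map (fun x => .inl (d x.1, x.2.map (Sum.map v id))) ++ mapRaw v d false rest := by
  induction l with
  | nil => rfl
  | cons x l ih => simp only [List.map_cons, List.cons_append, mapRaw, isRelSymbol, mapSymbol, ih]

theorem mapRaw_raw_append {g : ℕ → ℕ} (hg : ∀ j, g (j + 1) ≤ g j + 1)
    {w : ∀ j, α ⊕ Fin j → β ⊕ Fin (g j)} {v : ℕ ⊕ ℕ → ℕ ⊕ ℕ} (φ : L.BoundedFormula α k)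
    (hgk : ∀ j ≥ k, g (j + 1) = g j + 1)
    (hv : ∀ j ≥ k, ∀ x, v (x.map Encodable.encode Fin.val) =
      (w j x).map Encodable.encode Fin.val) (rest : List FormulaSymbol) :
    mapRaw v g false (raw φ ++ rest) = raw (mapVars hg w φ) ++ mapRaw v g false rest := by
  induction φ generalizing rest with
  | falsum => simp [mapVars, BoundedFormula.mapTermRel, mapRaw, mapSymbol, isRelSymbol]
  | equal t s =>
    simp [mapVars, BoundedFormula.mapTermRel, mapRaw, mapSymbol, isRelSymbol,
      rawTerm_relabel (hv _ le_rfl)]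
  | @rel k l R ts =>
    have hterms := mapRaw_false_map_inl_append v g
      ((List.finRange l).map fun i => (k, rawTerm (ts i))) rest
    rw [List.map_map, List.map_map] at hterms
    simp only [mapVars, BoundedFormula.mapTermRel, raw_rel, rawTerm_relabel (hv _ le_rfl),
      List.cons_append, mapRaw, mapSymbol, isRelSymbol, cond_true]
    congr 2
  | imp φ ψ ihφ ihψ =>
    simp only [mapVars] at ihφ ihψ
    simp [mapVars, BoundedFormula.mapTermRel, mapRaw, mapSymbol, isRelSymbol,
      ihφ hgk hv, ihψ hgk hv]
  | @all k φ ih =>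
    have ih := ih (fun j hj => hgk j (Nat.le_of_succ_le hj))
      (fun j hj => hv j (Nat.le_of_succ_le hj))
    simp only [mapVars] at ih
    simp [mapVars, BoundedFormula.mapTermRel, mapRaw, mapSymbol, isRelSymbol, ih,
      raw_castLE (hgk k le_rfl)]

theorem mapRaw_raw {g : ℕ → ℕ} (hg : ∀ j, g (j + 1) ≤ g j + 1)
    {w : ∀ j, α ⊕ Fin j → β ⊕ Fin (g j)} {v : ℕ ⊕ ℕ → ℕ ⊕ ℕ} (φ : L.BoundedFormula α k)
    (hgk : ∀ j ≥ k, g (j + 1) = g j + 1)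
    (hv : ∀ j ≥ k, ∀ x, v (x.map Encodable.encode Fin.val) =
      (w j x).map Encodable.encode Fin.val) :
    mapRaw v g false (raw φ) = raw (mapVars hg w φ) := by
  simpa only [mapRaw, List.append_nil] using mapRaw_raw_append hg φ hgk hv []

theorem raw_relabel {K : ℕ} {f : ℕ → ℕ ⊕ ℕ} {g : α → β ⊕ Fin K}
    (hf : ∀ a, f (Encodable.encode a) = (g a).map Encodable.encode Fin.val)
    (φ : L.BoundedFormula α k) :
    raw (φ.relabel g) = mapRaw (Sum.elim f fun i => .inr (K + i)) (K + ·) false (raw φ) := by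
  refine (mapRaw_raw (g := (K + ·)) (w := BoundedFormula.relabelAux g) (fun _ => le_rfl) φ
    (fun _ _ => rfl) fun j _ x => ?_).symm
  rcases x with a | i
  · simp only [Sum.map_inl, Sum.elim_inl, hf, BoundedFormula.relabelAux, Function.comp_apply]
    rcases g a with b | i <;> rfl
  · rfl

/-- The variables occurring in a formula are smaller than its code. -/
theorem relabel_mod_eq_self (φ : L.Formula ℕ) {K : ℕ} (hK : fmlCode φ < K) :
    φ.relabel (· % K) = φ := by
  have h : raw (φ.relabel (· % K) : L.Formula ℕ) = _ :=
    raw_relabel (K := 0) (f := fun j => .inl (j % K))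
    (g := fun j => (.inl (j % K) : ℕ ⊕ Fin 0)) (fun _ => rfl) φ
  refine raw_injective (h.trans (mapRaw_eq_self ?_ (fun i => Nat.zero_add i) false))
  rintro i t hit (j | j) hj
  · have hlt := lt_encode_of_mem hit hj
    rw [encode_raw] at hlt
    exact congrArg Sum.inl (Nat.mod_eq_of_lt (hlt.trans hK))
  · exact congrArg Sum.inr (Nat.zero_add j)

theorem realize_congr_of_le_fmlCode {M : Type} [L.Structure M] {φ : L.Formula ℕ} {v w : ℕ → M}
    (h : ∀ j ≤ fmlCode φ, v j = w j) : φ.Realize v ↔ φ.Realize w := by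
  rw [← relabel_mod_eq_self φ (Nat.lt_succ_self _), Formula.realize_relabel,
    Formula.realize_relabel, show v ∘ (· % (fmlCode φ).succ) = w ∘ (· % (fmlCode φ).succ) from
      funext fun j => h _ (Nat.le_of_lt_succ (Nat.mod_lt _ (Nat.succ_pos _)))]

end RawForm

section Validity

variable {α : Type} [Encodable α] {k : ℕ}

theorem exists_raw_eq_of_raw_eq_replicate_append (d : ℕ) {l : List FormulaSymbol}
    {φ : L.BoundedFormula α k} (h : raw φ = List.replicate d (numSymbol 1) ++ l) :
    ∃ ψ : L.BoundedFormula α (d + k), raw ψ = l := by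
  induction d generalizing k with
  | zero =>
    rw [Nat.zero_add]
    exact ⟨φ, h⟩
  | succ d ih =>
    cases φ with
    | all φ =>
      rw [Nat.add_right_comm]
      exact ih (List.cons_inj_right _ |>.1 h)
    | _ => simp [List.replicate_succ] at h

theorem eq_falsum_of_raw_append_eq_cons {j : ℕ} {l l' : List FormulaSymbol}
    {φ : L.BoundedFormula α k} (h : raw φ ++ l = numSymbol (j + 2) :: l') : φ = ⊥ := by
  cases φ with
  | falsum => rfl
  | _ => simp at h

theorem exists_raw_eq_of_raw_eq_imp_falsum {j : ℕ} {l : List FormulaSymbol}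
    {φ : L.BoundedFormula α k} (h : raw φ = numSymbol 0 :: numSymbol (j + 2) :: l) :
    ∃ ψ : L.BoundedFormula α k, raw ψ = l := by
  cases φ with
  | imp φ ψ =>
    rw [raw_imp, List.cons_inj_right] at h
    obtain rfl := eq_falsum_of_raw_append_eq_cons h
    exact ⟨ψ, (List.cons.inj h).2⟩
  | _ => simp at h

/-- Turns the free variables of a raw formula into `K` new bound variables. -/
def bindRaw (K : ℕ) : List FormulaSymbol → List FormulaSymbol :=
  mapRaw (Sum.elim (fun j => .inr (j % K)) fun i => .inr (K + i)) (K + ·) false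

/-- Turns the `K` outermost bound variables of a raw formula into free variables. -/
def unbindRaw (K : ℕ) : List FormulaSymbol → List FormulaSymbol :=
  mapRaw (Sum.elim .inl fun i => if i < K then .inl i else .inr (i - K)) (· - K) false

theorem unbindRaw_bindRaw {K : ℕ} {l : List FormulaSymbol} (hK : Encodable.encode l < K) :
    unbindRaw K (bindRaw K l) = l := by
  rw [unbindRaw, bindRaw, mapRaw_mapRaw]
  refine mapRaw_eq_self (d := (· - K) ∘ (K + ·)) ?_ (Nat.add_sub_cancel_left K) false
  rintro i t hit (j | j) hj
  · have hlt := (lt_encode_of_mem hit hj).trans hK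
    simp [Nat.mod_eq_of_lt hlt, hlt]
  · simp

theorem raw_bind (K : ℕ) [NeZero K] (β : Type) [Encodable β] (φ : L.Formula ℕ) :
    raw (BoundedFormula.relabel (fun j => (.inr (Fin.ofNat K j) : β ⊕ Fin K)) φ) =
      bindRaw K (raw φ) :=
  raw_relabel (f := fun j => .inr (j % K)) (fun _ => rfl) φ

theorem exists_raw_eq_unbindRaw {n K : ℕ} (φ : L.BoundedFormula (Fin n) K) :
    ∃ ψ : L.Formula ℕ, raw ψ = unbindRaw K (raw φ) := by
  let w : ∀ j, Fin n ⊕ Fin j → ℕ ⊕ Fin (j - K) := fun j =>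
    Sum.elim (fun i => .inl i.val) fun i => if h : i < K then .inl i.val else .inr ⟨i - K, by omega⟩
  have hraw : unbindRaw K (raw φ) = raw (mapVars (g := (· - K)) (fun j => by omega) w φ) := by
    refine mapRaw_raw (fun j => by omega) φ (fun j hj => by omega) fun j _ x => ?_
    rcases x with i | i
    · rfl
    · by_cases hi : i < K <;> simp [w, hi]
  have hcast : ∀ m, m = 0 → ∀ θ : L.BoundedFormula ℕ m, ∃ ψ : L.Formula ℕ, raw ψ = raw θ := by
    rintro _ rfl θ
    exact ⟨θ, rfl⟩
  rw [hraw]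
  exact hcast _ (Nat.sub_self K) _

/-- The raw form of the tautology `∀ … ∀ (⊥ → φ)` for `φ` with raw form `l`. As every complete type
contains it, a type detects which lists are raw forms of formulas. -/
def vacuousRaw (l : List FormulaSymbol) : List FormulaSymbol :=
  List.replicate (Encodable.encode l + 1) (numSymbol 1) ++
    numSymbol 0 :: numSymbol (Encodable.encode l + 1 + 2) :: bindRaw (Encodable.encode l + 1) l

theorem exists_raw_eq_iff_of_isTypeOf {T : L.Theory} {n : ℕ} {p : Set (L.Formula (Fin n))}
    (hp : IsTypeOf T p) (l : List FormulaSymbol) :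
    (∃ φ : L.Formula ℕ, raw φ = l) ↔ ∃ φ ∈ p, raw φ = vacuousRaw l := by
  constructor
  · rintro ⟨φ, rfl⟩
    let K := Encodable.encode (raw φ) + 1
    let ψ : L.BoundedFormula (Fin n) K := BoundedFormula.imp ⊥
      (BoundedFormula.relabel (fun j => (.inr (Fin.ofNat K j) : Fin n ⊕ Fin K)) φ)
    refine ⟨ψ.alls, ?_, ?_⟩
    · obtain ⟨M, -, a, rfl⟩ := hp
      exact BoundedFormula.realize_alls.2 fun xs h => h.elim
    · have hbind := raw_bind K (Fin n) φ
      rw [raw_alls, raw_imp]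
      exact congrArg (fun l' => List.replicate K (numSymbol 1) ++
        numSymbol 0 :: numSymbol (K + 2) :: l') hbind
  · rintro ⟨φ, -, hφ⟩
    obtain ⟨θ, hθ⟩ := exists_raw_eq_of_raw_eq_replicate_append _ hφ
    obtain ⟨χ, hχ⟩ := exists_raw_eq_of_raw_eq_imp_falsum hθ
    obtain ⟨ψ, hψ⟩ := exists_raw_eq_unbindRaw χ
    exact ⟨ψ, by rw [hψ, hχ]; exact unbindRaw_bindRaw (Nat.lt_succ_self _)⟩

end Validity

section Primrec

variable {A : Type} [Primcodable A]

theorem primrec_numSymbol : Primrec numSymbol := Primrec.sumInr.comp Primrec.sumInr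

theorem primrec_replicate {B : Type} [Primcodable B] (b : B) :
    Primrec fun n => List.replicate n b :=
  (Primrec.list_map Primrec.list_range (Primrec.const b).to₂).of_eq fun n => by simp

theorem primrec₂_sumElim {B C D : Type} [Primcodable B] [Primcodable C] [Primcodable D]
    {f : A → B → D} {g : A → C → D} (hf : Primrec₂ f) (hg : Primrec₂ g) :
    Primrec₂ fun a => Sum.elim (f a) (g a) :=
  (Primrec.sumCasesOn Primrec.snd (hf.comp (Primrec.fst.comp Primrec.fst) Primrec.snd).to₂
    (hg.comp (Primrec.fst.comp Primrec.fst) Primrec.snd).to₂).of_eq fun ⟨_, x⟩ => by cases x <;> rfl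

theorem primrec_isRelSymbol : Primrec isRelSymbol :=
  (Primrec.sumCasesOn Primrec.id (Primrec.const false).to₂
    (Primrec.sumCasesOn Primrec.snd (Primrec.const true).to₂ (Primrec.const false).to₂).to₂).of_eq
    fun x => by rcases x with _ | _ | _ <;> rfl

variable {v : A → ℕ ⊕ ℕ → ℕ ⊕ ℕ} {d : A → ℕ → ℕ}

theorem primrec₂_mapSymbol_inl (hv : Primrec₂ v) (hd : Primrec₂ d) :
    Primrec₂ fun (x : A × Bool) y => mapSymbol (v x.1) (d x.1) x.2 (.inl y) := by
  have hsymbol : Primrec₂ fun (a : A) => Sum.map (v a) (id : ℕ × ℕ → ℕ × ℕ) :=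
    primrec₂_sumElim (Primrec.sumInl.comp₂ hv) (Primrec.sumInr.comp₂ Primrec₂.right)
  exact Primrec.sumInl.comp₂ (Primrec.pair
    (hd.comp (Primrec.fst.comp Primrec.fst) (Primrec.fst.comp Primrec.snd))
    (Primrec.list_map (Primrec.snd.comp Primrec.snd)
      (hsymbol.comp₂ (Primrec.fst.comp (Primrec.fst.comp Primrec.fst)) Primrec₂.right)))

theorem primrec₂_mapSymbol_num (hd : Primrec₂ d) :
    Primrec₂ fun (x : A × Bool) j => mapSymbol (v x.1) (d x.1) x.2 (numSymbol j) :=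
  have ha : Primrec fun y : (A × Bool) × ℕ => y.1.1 := Primrec.fst.comp Primrec.fst
  primrec_numSymbol.comp₂ (Primrec.cond (Primrec.snd.comp Primrec.fst) (hd.comp ha Primrec.snd)
    (Primrec.ite (Primrec.nat_lt.comp Primrec.snd (Primrec.const 2)) Primrec.snd
      (Primrec.nat_add.comp (hd.comp ha (Primrec.nat_sub.comp Primrec.snd (Primrec.const 2)))
        (Primrec.const 2))))

theorem primrec₂_mapSymbol (hv : Primrec₂ v) (hd : Primrec₂ d) :
    Primrec₂ fun (x : A × Bool) y => mapSymbol (v x.1) (d x.1) x.2 y :=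
  (primrec₂_sumElim (primrec₂_mapSymbol_inl hv hd) (primrec₂_sumElim
    (Primrec.sumInr.comp₂ (Primrec.sumInl.comp₂ Primrec₂.right))
    (primrec₂_mapSymbol_num (v := v) hd))).of_eq fun _ y => by rcases y with _ | _ | _ <;> rfl

theorem foldl_mapSymbol (v : ℕ ⊕ ℕ → ℕ ⊕ ℕ) (d : ℕ → ℕ) (l : List FormulaSymbol) (b : Bool)
    (acc : List FormulaSymbol) :
    (l.foldl (fun s x => (isRelSymbol x, s.2 ++ [mapSymbol v d s.1 x])) (b, acc)).2 =
      acc ++ mapRaw v d b l := by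
  induction l generalizing b acc with
  | nil => simp only [List.foldl_nil, mapRaw, List.append_nil]
  | cons x l ih =>
    rw [List.foldl_cons, ih, mapRaw, List.append_assoc, List.singleton_append]

theorem primrec₂_mapRaw (hv : Primrec₂ v) (hd : Primrec₂ d) :
    Primrec₂ fun a l => mapRaw (v a) (d a) false l := by
  have hstep : Primrec₂ fun (a : A × List FormulaSymbol)
      (s : (Bool × List FormulaSymbol) × FormulaSymbol) =>
      (isRelSymbol s.2, s.1.2 ++ [mapSymbol (v a.1) (d a.1) s.1.1 s.2]) :=
    Primrec.pair (primrec_isRelSymbol.comp (Primrec.snd.comp Primrec.snd))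
      (Primrec.list_append.comp (Primrec.snd.comp (Primrec.fst.comp Primrec.snd))
        (Primrec.list_cons.comp ((primrec₂_mapSymbol hv hd).comp
          (Primrec.pair (Primrec.fst.comp Primrec.fst)
            (Primrec.fst.comp (Primrec.fst.comp Primrec.snd))) (Primrec.snd.comp Primrec.snd))
          (Primrec.const [])))
  exact (Primrec.snd.comp (Primrec.list_foldl Primrec.snd
    (Primrec.const (false, ([] : List FormulaSymbol))) hstep)).of_eq fun ⟨a, l⟩ =>
      (foldl_mapSymbol (v a) (d a) l false []).trans (List.nil_append _)

end Primrec

section ComputablePred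

variable {A B : Type} [Primcodable A] [Primcodable B]

theorem computablePred_comp {P : B → Prop} (hP : ComputablePred P) {f : A → B}
    (hf : Computable f) : ComputablePred fun a => P (f a) :=
  ComputablePred.computable_of_manyOneReducible ⟨f, hf, fun _ => Iff.rfl⟩ hP

theorem computablePred_and {P Q : A → Prop} (hP : ComputablePred P) (hQ : ComputablePred Q) :
    ComputablePred fun a => P a ∧ Q a := by
  classical
  exact Computable.computablePred ((Primrec.and.to_comp.comp hP.decide hQ.decide).of_eq fun a => by
    rw [Bool.decide_and])

theorem computablePred_or {P Q : A → Prop} (hP : ComputablePred P) (hQ : ComputablePred Q) :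
    ComputablePred fun a => P a ∨ Q a := by
  classical
  exact Computable.computablePred ((Primrec.or.to_comp.comp hP.decide hQ.decide).of_eq fun a => by
    rw [Bool.decide_or])

/-- Post's theorem for projections of computable predicates. -/
theorem computablePred_of_iff_exists {P : A → Prop} {Q R : A × ℕ → Prop}
    (hQ : ComputablePred Q) (hR : ComputablePred R) (hPQ : ∀ a, P a ↔ ∃ s, Q (a, s))
    (hPR : ∀ a, ¬ P a ↔ ∃ s, R (a, s)) : ComputablePred P := by
  classical
  have hex : ∀ a, ∃ s, Q (a, s) ∨ R (a, s) := fun a => by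
    by_cases h : P a
    · exact ((hPQ a).1 h).imp fun _ => .inl
    · exact ((hPR a).1 h).imp fun _ => .inr
  have hfind : Computable fun a => Nat.find (hex a) :=
    Computable.find (P := fun a s => Q (a, s) ∨ R (a, s)) (computablePred_or hQ hR) hex
  refine (computablePred_comp hQ (Computable.id.pair hfind)).of_eq fun a =>
    ⟨fun h => (hPQ a).2 ⟨_, h⟩, fun h => ?_⟩
  exact (Nat.find_spec (hex a)).resolve_right fun hR => (hPR a).2 ⟨_, hR⟩ h

end ComputablePred

section Families

variable {A C α β : Type} [Primcodable A] [Primcodable C] [Encodable α] [Encodable β]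

theorem fmlCode_eq_encode_iff {k : ℕ} {φ : L.BoundedFormula α k} {l : List FormulaSymbol} :
    fmlCode φ = Encodable.encode l ↔ raw φ = l := by
  rw [← encode_raw, Encodable.encode_injective.eq_iff]

/-- A family of formulas that depends computably on its index. -/
def ComputableFamily {k : A → ℕ} (φ : ∀ a, L.BoundedFormula α (k a)) : Prop :=
  Computable fun a => raw (φ a)

theorem computableFamily_const {k : ℕ} (φ : L.BoundedFormula α k) :
    ComputableFamily fun _ : A => φ :=
  Computable.const (raw φ)

/-- The operation on raw forms that corresponds to the negation of formulas in the scope of `k`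
bound variables. -/
def notRaw (k : ℕ) (l : List FormulaSymbol) : List FormulaSymbol :=
  numSymbol 0 :: (l ++ [numSymbol (k + 2)])

/-- The operation on raw forms that corresponds to the conjunction of formulas in the scope of `k`
bound variables. -/
def infRaw (k : ℕ) (l l' : List FormulaSymbol) : List FormulaSymbol :=
  notRaw k (numSymbol 0 :: (l ++ notRaw k l'))

theorem raw_inf {k : ℕ} (φ ψ : L.BoundedFormula α k) : raw (φ ⊓ ψ) = infRaw k (raw φ) (raw ψ) := by
  rw [infRaw, show notRaw k (raw ψ) = raw ψ.not from (raw_not ψ).symm, ← raw_imp]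
  exact raw_not _

theorem primrec_notRaw (k : ℕ) : Primrec (notRaw k) :=
  Primrec.list_cons.comp (Primrec.const _)
    (Primrec.list_append.comp Primrec.id (Primrec.const _))

theorem primrec₂_infRaw (k : ℕ) : Primrec₂ (infRaw k) :=
  ((primrec_notRaw k).comp (Primrec.list_cons.comp (Primrec.const (numSymbol 0))
    (Primrec.list_append.comp Primrec.fst ((primrec_notRaw k).comp Primrec.snd)))).to₂

namespace ComputableFamily

variable {k : A → ℕ} {φ : ∀ a, L.BoundedFormula α (k a)}

theorem comp (hφ : ComputableFamily φ) {f : C → A} (hf : Computable f) :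
    ComputableFamily fun c => φ (f c) :=
  Computable.comp (f := fun a => raw (φ a)) hφ hf

theorem computable_fmlCode (hφ : ComputableFamily φ) : Computable fun a => fmlCode (φ a) :=
  (Computable.encode.comp hφ).of_eq fun a => encode_raw (φ a)

theorem not {k : ℕ} {φ : A → L.BoundedFormula α k} (hφ : ComputableFamily φ) :
    ComputableFamily fun a => (φ a).not :=
  ((primrec_notRaw k).to_comp.comp hφ).of_eq fun a => (raw_not (φ a)).symm

theorem inf {k : ℕ} {φ ψ : A → L.BoundedFormula α k} (hφ : ComputableFamily φ)
    (hψ : ComputableFamily ψ) : ComputableFamily fun a => φ a ⊓ ψ a :=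
  ((primrec₂_infRaw k).to_comp.comp hφ hψ).of_eq fun a => (raw_inf (φ a) (ψ a)).symm

theorem all {φ : ∀ a, L.BoundedFormula α (k a + 1)} (hφ : ComputableFamily φ) :
    ComputableFamily fun a => (φ a).all :=
  Computable.list_cons.comp (Computable.const (numSymbol 1)) hφ

theorem alls (hφ : ComputableFamily φ) (hk : Computable k) :
    ComputableFamily (k := fun _ => 0) fun a => (φ a).alls :=
  (Computable.list_append.comp ((primrec_replicate (numSymbol 1)).to_comp.comp hk) hφ).of_eq
    fun _ => (raw_alls _).symm

theorem relabel (hφ : ComputableFamily φ) {c : A → C} (hc : Computable c) {K : C → ℕ}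
    (hK : Primrec K) {f : C → ℕ → ℕ ⊕ ℕ} (hf : Primrec₂ f) {g : ∀ a, α → β ⊕ Fin (K (c a))}
    (hg : ∀ a x, f (c a) (Encodable.encode x) = (g a x).map Encodable.encode Fin.val) :
    ComputableFamily fun a => (φ a).relabel (g a) :=
  have hv : Primrec₂ fun c => Sum.elim (f c) fun i => .inr (K c + i) :=
    primrec₂_sumElim hf (Primrec.sumInr.comp₂ (Primrec.nat_add.comp₂
      (hK.comp₂ Primrec₂.left) Primrec₂.right))
  ((primrec₂_mapRaw hv (Primrec.nat_add.comp₂ (hK.comp₂ Primrec₂.left)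
    Primrec₂.right)).to_comp.comp hc hφ).of_eq fun a => (raw_relabel (hg a) (φ a)).symm

theorem formulaRelabel {φ : A → L.Formula α} (hφ : ComputableFamily φ) {c : A → C}
    (hc : Computable c) {f : C → ℕ → ℕ} (hf : Primrec₂ f) {g : A → α → β}
    (hg : ∀ a x, f (c a) (Encodable.encode x) = Encodable.encode (g a x)) :
    ComputableFamily fun a => (φ a).relabel (g a) :=
  hφ.relabel hc (Primrec.const 0) (Primrec.sumInl.comp₂ hf)
    (g := fun a x => .inl (g a x)) fun a x => congrArg Sum.inl (hg a x)

theorem initialConj {e : ℕ → L.Formula α} (he : ComputableFamily e) :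
    ComputableFamily (initialConj e) :=
  (Computable.nat_rec Computable.id (Computable.const (raw (⊤ : L.Formula α)))
    ((primrec₂_infRaw 0).to_comp.comp (Computable.snd.comp Computable.snd)
      (Computable.comp he (Computable.fst.comp Computable.snd))).to₂).of_eq fun s => by
    induction s with
    | zero => rfl
    | succ s ih => exact (congrArg (infRaw 0 · _) ih).trans (raw_inf _ _).symm

end ComputableFamily

/-- The codes of the formulas in a set form a computable set. -/
def DecidableSet (S : Set (L.Formula α)) : Prop :=
  ComputablePred fun c => ∃ φ : L.Formula α, fmlCode φ = c ∧ φ ∈ S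

/-- Membership in a set of formulas is computable uniformly on computable families. Unlike
`DecidableSet`, this does not require to recognize the codes of formulas. -/
def DecidableOnFamilies (S : Set (L.Formula α)) : Prop :=
  ∀ {A : Type} [Primcodable A] {φ : A → L.Formula α},
    ComputableFamily φ → ComputablePred fun a => φ a ∈ S

theorem DecidableSet.decidableOnFamilies {S : Set (L.Formula α)} (hS : DecidableSet S) :
    DecidableOnFamilies S := fun hφ =>
  (computablePred_comp hS hφ.computable_fmlCode).of_eq fun _ =>
    ⟨fun ⟨_, hψ, hS⟩ => fmlCode_injective hψ ▸ hS, fun h => ⟨_, rfl, h⟩⟩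

theorem DecidableSet.exists_enumeration {S : Set (L.Formula α)} (hS : DecidableSet S)
    (hne : S.Nonempty) :
    ∃ e : ℕ → L.Formula α, ComputableFamily e ∧ (∀ c, e c ∈ S) ∧ ∀ φ ∈ S, e (fmlCode φ) = φ := by
  classical
  obtain ⟨φ₀, hφ₀⟩ := hne
  have hex : ∀ c, ∃ φ ∈ S, raw φ = bif decide (∃ φ : L.Formula α, fmlCode φ = c ∧ φ ∈ S) then
      (Encodable.decode (α := List FormulaSymbol) c).getD [] else raw φ₀ := fun c => by
    by_cases hc : ∃ φ : L.Formula α, fmlCode φ = c ∧ φ ∈ S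
    · obtain ⟨φ, rfl, hφ⟩ := id hc
      refine ⟨φ, hφ, ?_⟩
      rw [decide_eq_true hc, cond_true, ← encode_raw, Encodable.encodek, Option.getD_some]
    · exact ⟨φ₀, hφ₀, by rw [decide_eq_false hc, cond_false]⟩
  choose e heS he using hex
  refine ⟨e, ?_, heS, fun φ hφ => raw_injective ?_⟩
  · exact (Computable.cond hS.decide
      (Computable.option_getD Computable.decode (Computable.const [])) (Computable.const _)).of_eq
        fun c => (he c).symm
  · rw [he, decide_eq_true ⟨φ, rfl, hφ⟩, cond_true, ← encode_raw, Encodable.encodek,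
      Option.getD_some]

theorem DecidableOnFamilies.decidableSet {S : Set (L.Formula α)} (hS : DecidableOnFamilies S)
    (huniv : DecidableSet (Set.univ : Set (L.Formula α))) : DecidableSet S := by
  obtain ⟨e, he, -, hcode⟩ := huniv.exists_enumeration ⟨⊤, trivial⟩
  refine (computablePred_and huniv (hS he)).of_eq fun c => ?_
  constructor
  · rintro ⟨⟨φ, rfl, -⟩, hφ⟩
    exact ⟨φ, rfl, hcode φ trivial ▸ hφ⟩
  · rintro ⟨φ, rfl, hφ⟩
    exact ⟨⟨φ, rfl, trivial⟩, (hcode φ trivial).symm ▸ hφ⟩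

theorem primrec₂_bindRaw : Primrec₂ bindRaw :=
  primrec₂_mapRaw (primrec₂_sumElim
    (Primrec.sumInr.comp₂ (Primrec.nat_mod.comp₂ Primrec₂.right Primrec₂.left))
    (Primrec.sumInr.comp₂ Primrec.nat_add)) Primrec.nat_add

theorem primrec_vacuousRaw : Primrec vacuousRaw :=
  have hK : Primrec fun l : List FormulaSymbol => Encodable.encode l + 1 :=
    Primrec.succ.comp Primrec.encode
  Primrec.list_append.comp ((primrec_replicate (numSymbol 1)).comp hK)
    (Primrec.list_cons.comp (Primrec.const (numSymbol 0))
      (Primrec.list_cons.comp (primrec_numSymbol.comp (Primrec.nat_add.comp hK (Primrec.const 2)))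
        (primrec₂_bindRaw.comp hK Primrec.id)))

theorem decidableSet_univ_of_isTypeOf {T : L.Theory} {n : ℕ} {p : Set (L.Formula (Fin n))}
    (hp : IsTypeOf T p) (hdec : DecidableType p) :
    DecidableSet (Set.univ : Set (L.Formula ℕ)) := by
  let decodeRaw : ℕ → List FormulaSymbol := fun c => (Encodable.decode c).getD []
  have hencode : ∀ c, Encodable.encode (decodeRaw c) = c := fun c => by
    simp only [decodeRaw, Denumerable.decode_eq_ofNat, Option.getD_some, Denumerable.encode_ofNat]
  have hdecode : Computable decodeRaw :=
    Computable.option_getD Computable.decode (Computable.const [])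
  refine (computablePred_comp hdec (Computable.encode.comp
    (primrec_vacuousRaw.to_comp.comp hdecode))).of_eq fun c => ?_
  have hvalid := exists_raw_eq_iff_of_isTypeOf hp (decodeRaw c)
  have hcode : (∃ φ : L.Formula ℕ, fmlCode φ = c) ↔ ∃ φ : L.Formula ℕ, raw φ = decodeRaw c := by
    simp only [← fmlCode_eq_encode_iff, hencode]
  simp only [Set.mem_univ, and_true, hcode, hvalid, fmlCode_eq_encode_iff]
  simp only [and_comm]

end Families

section UniversalClosure

variable {L : FirstOrder.Language.{0, 0}} {T : L.Theory} {α : Type}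

theorem IsolatesOver.realize_iff {Γ : Set (L.Formula α)} {χ : L.Formula α}
    (hχ : IsolatesOver T Γ χ) {M : Mdl T} {v : α → M} (hΓ : ∀ γ ∈ Γ, γ.Realize v)
    (hv : χ.Realize v) {φ : L.Formula α} : φ.Realize v ↔ ¬ ConsistentWith T Γ (χ ⊓ φ.not) := by
  refine ⟨fun h hnot => hχ.2 φ ⟨⟨M, v, hΓ, Formula.realize_inf.2 ⟨hv, h⟩⟩, hnot⟩, fun h => ?_⟩
  by_contra hφ
  exact h ⟨M, v, hΓ, Formula.realize_inf.2 ⟨hv, Formula.realize_not.2 hφ⟩⟩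

theorem consistentWith_range_iff [Countable α] [Countable L.Symbols] {e : ℕ → L.Formula α}
    {φ : L.Formula α} : ConsistentWith T (Set.range e) φ ↔
      ∀ s, ∃ M : Mdl T, ∃ v : α → M, (initialConj e s ⊓ φ).Realize v := by
  constructor
  · rintro ⟨M, v, he, hφ⟩ s
    exact ⟨M, v, Formula.realize_inf.2 ⟨realize_initialConj.2 fun i _ => he _ ⟨i, rfl⟩, hφ⟩⟩
  · intro h
    obtain ⟨M, -, v, -, hv⟩ := exists_countable_realize_of_antitone (T := T) (Γ := ∅)
      (θ := fun s => initialConj e s ⊓ φ)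
      (fun s M v h => by
        rw [Formula.realize_inf] at h ⊢
        exact ⟨(Formula.realize_inf.1 h.1).1, h.2⟩)
      fun s => (h s).imp fun M => Exists.imp fun v hv => ⟨fun _ => False.elim, hv⟩
    refine ⟨M, v, ?_, (Formula.realize_inf.1 (hv 0)).2⟩
    rintro _ ⟨i, rfl⟩
    exact realize_initialConj.1 (Formula.realize_inf.1 (hv (i + 1))).1 i i.lt_succ_self

theorem realize_boundedFormula_relabel {β M : Type} [L.Structure M] {K : ℕ} {g : α → β ⊕ Fin K}
    {φ : L.Formula α} {w : β → M} {x : Fin K → M} :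
    (BoundedFormula.relabel g φ).Realize w x ↔ φ.Realize (Sum.elim w x ∘ g) := by
  rw [BoundedFormula.realize_relabel, Formula.Realize, Fin.castAdd_zero, Fin.cast_refl,
    Function.comp_id, Subsingleton.elim (x ∘ (Fin.natAdd K : Fin 0 → Fin K)) default]

/-- The universal closure of a formula, with vacuous free variables in `β`. -/
def univClosure (β : Type) {N : ℕ} (φ : L.Formula (Fin N)) : L.Formula β :=
  (BoundedFormula.relabel (Sum.inr : Fin N → β ⊕ Fin N) φ).alls

theorem realize_univClosure {β M : Type} [L.Structure M] {N : ℕ} {φ : L.Formula (Fin N)}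
    {w : β → M} : (univClosure β φ).Realize w ↔ ∀ v : Fin N → M, φ.Realize v :=
  BoundedFormula.realize_alls.trans (forall_congr' fun _ => realize_boundedFormula_relabel)

theorem univClosure_mem_iff (hT : T.IsComplete) {n N : ℕ} {p : Set (L.Formula (Fin n))}
    (hp : IsTypeOf T p) {φ : L.Formula (Fin N)} :
    univClosure (Fin n) φ ∈ p ↔ ∀ (M : Mdl T) (v : Fin N → M), φ.Realize v := by
  obtain ⟨M, -, a, rfl⟩ := hp
  refine realize_univClosure.trans ⟨fun h K v => ?_, fun h => h M⟩
  by_contra hv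
  obtain ⟨w, hw⟩ := exists_realize_of_isComplete hT (Formula.realize_not.2 hv) M
  exact Formula.realize_not.1 hw (h w)

end UniversalClosure

section DecidableCompletion

theorem ComputableFamily.univClosure {A : Type} [Primcodable A] {n N : ℕ}
    {φ : A → L.Formula (Fin N)} (hφ : ComputableFamily φ) :
    ComputableFamily fun a => univClosure (Fin n) (φ a) :=
  (hφ.relabel (Computable.const ()) (Primrec.const N) (f := fun _ => Sum.inr)
    (Primrec.sumInr.comp₂ Primrec₂.right) (fun _ _ => rfl)).alls (Computable.const N)

variable {T : L.Theory} {n N : ℕ}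

theorem exists_isTypeOf_decidableOnFamilies (hT : T.IsComplete) (hsmall : IsSmall T)
    {p : Set (L.Formula (Fin n))} (hp : IsTypeOf T p) (hdec : DecidableOnFamilies p)
    {e : ℕ → L.Formula (Fin N)} (he : ComputableFamily e)
    (hcon : ConsistentWith T (Set.range e) ⊤) :
    ∃ r, IsTypeOf T r ∧ Set.range e ⊆ r ∧ DecidableOnFamilies r := by
  obtain ⟨χ, hχ⟩ := exists_isolatesOver hsmall hcon
  obtain ⟨K, u, hKe, hKχ⟩ := id hχ.1
  obtain ⟨M, hM, v, hv⟩ := exists_countable_realize_iff K u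
  have hMe : ∀ γ ∈ Set.range e, γ.Realize v := fun γ hγ => (hv γ).2 (hKe γ hγ)
  have hmem : ∀ φ, φ ∈ typeOf M v ↔
      ∃ s, univClosure (Fin n) (initialConj e s ⊓ (χ ⊓ φ.not)).not ∈ p := fun φ => by
    refine (hχ.realize_iff hMe ((hv χ).2 hKχ)).trans ?_
    simp only [consistentWith_range_iff, univClosure_mem_iff hT hp, Formula.realize_not, not_forall,
      not_exists]
  refine ⟨typeOf M v, ⟨M, hM, v, rfl⟩, hMe, fun {A _ φ} hφ => ?_⟩
  have hsearch : ∀ {ψ : A → L.Formula (Fin N)}, ComputableFamily ψ → ComputablePred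
      fun a : A × ℕ => univClosure (Fin n) (initialConj e a.2 ⊓ (χ ⊓ (ψ a.1).not)).not ∈ p :=
    fun hψ => hdec ((he.initialConj.comp Computable.snd).inf
      ((computableFamily_const χ).inf (hψ.not.comp Computable.fst))).not.univClosure
  refine computablePred_of_iff_exists (hsearch hφ) (hsearch hφ.not) (fun a => hmem (φ a))
    fun a => ?_
  exact (not_mem_iff_of_isTypeOf ⟨M, hM, v, rfl⟩).symm.trans (hmem (φ a).not)

end DecidableCompletion

section ConsSeq

/-- The sequence obtained by putting `x` in front of the sequence `v`. -/
def consSeq {X : Type} (x : X) (v : ℕ → X) : ℕ → X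
  | 0 => x
  | j + 1 => v j

theorem primrec₂_consSeq {C X : Type} [Primcodable C] [Primcodable X] {x : C → X} {v : C → ℕ → X}
    (hx : Primrec x) (hv : Primrec₂ v) : Primrec₂ fun c => consSeq (x c) (v c) :=
  (Primrec.nat_casesOn Primrec.snd (hx.comp Primrec.fst)
    (hv.comp (Primrec.fst.comp Primrec.fst) Primrec.snd).to₂).of_eq
      fun ⟨_, j⟩ => by cases j <;> rfl

theorem comp_consSeq {X Y : Type} (f : X → Y) (x : X) (v : ℕ → X) :
    f ∘ consSeq x v = consSeq (f x) (f ∘ v) := by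
  funext j
  cases j <;> rfl

end ConsSeq

section Henkin

variable {L : FirstOrder.Language.{0, 0}} {M : Type} [L.Structure M]

theorem meetsDefinable_range {v : ℕ → M} (h : ∀ φ : L.Formula ℕ,
    (∀ j, φ.Realize (consSeq (v j) v)) → ∀ x, φ.Realize (consSeq x v)) :
    L.MeetsDefinable (Set.range v) := by
  rintro D ⟨x, hx⟩ hD
  obtain ⟨φ, hφ⟩ := Set.definable_iff_exists_formula_sum.1 hD
  choose index hindex using fun a : Set.range v => a.2
  let ψ : L.Formula ℕ := φ.relabel (Sum.elim (fun a => index a + 1) fun _ => 0)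
  have hψ : ∀ y, ψ.Realize (consSeq y v) ↔ y ∈ D := fun y => by
    refine Formula.realize_relabel.trans (Iff.trans (iff_of_eq (congrArg φ.Realize ?_))
      (Set.ext_iff.1 hφ fun _ => y).symm)
    funext i
    rcases i with a | i
    exacts [hindex a, rfl]
  by_contra hempty
  refine Formula.realize_not.1 (h ψ.not (fun j => Formula.realize_not.2 fun hj => ?_) x)
    ((hψ x).2 hx)
  exact hempty ⟨v j, (hψ _).1 hj, j, rfl⟩

/-- The universal quantification of a formula over its variable `0`, the other variables being
shifted down. -/
def allZero (φ : L.Formula ℕ) : L.Formula ℕ :=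
  (BoundedFormula.relabel (consSeq (.inr 0) .inl : ℕ → ℕ ⊕ Fin 1) φ).all

theorem realize_allZero {φ : L.Formula ℕ} {v : ℕ → M} :
    (allZero φ).Realize v ↔ ∀ x, φ.Realize (consSeq x v) := by
  refine BoundedFormula.realize_all.trans (forall_congr' fun x => ?_)
  rw [realize_boundedFormula_relabel, comp_consSeq]
  rfl

theorem realize_allZero_relabel_succ [Nonempty M] {φ : L.Formula ℕ} {v : ℕ → M} :
    (allZero (φ.relabel Nat.succ)).Realize v ↔ φ.Realize v := by
  refine realize_allZero.trans ⟨fun h => ?_, fun h x => Formula.realize_relabel.2 h⟩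
  exact (Formula.realize_relabel (g := Nat.succ)).1 (h (Classical.arbitrary M))

/-- The substitution of variable `j` for the variable `0` of a formula, the other variables being
shifted down. -/
def instZero (j : ℕ) (φ : L.Formula ℕ) : L.Formula ℕ :=
  φ.relabel (consSeq j id)

theorem realize_instZero {j : ℕ} {φ : L.Formula ℕ} {v : ℕ → M} :
    (instZero j φ).Realize v ↔ φ.Realize (consSeq (v j) v) := by
  rw [instZero, Formula.realize_relabel, comp_consSeq, Function.comp_id]

/-- The formulas of `r`, with their variables viewed as the first `k` elements of `ℕ`. -/
def onInitialVars {k : ℕ} (r : Set (L.Formula (Fin k))) : Set (L.Formula ℕ) :=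
  (fun φ => φ.relabel Fin.val) '' r

theorem forall_mem_onInitialVars_iff {k : ℕ} {r : Set (L.Formula (Fin k))} {v : ℕ → M} :
    (∀ γ ∈ onInitialVars r, γ.Realize v) ↔ ∀ φ ∈ r, φ.Realize (v ∘ Fin.val) := by
  simp only [onInitialVars, Set.forall_mem_image, Formula.realize_relabel]

theorem consistentWith_onInitialVars_top {T : L.Theory} {k : ℕ} {r : Set (L.Formula (Fin k))}
    (hr : IsTypeOf T r) : ConsistentWith T (onInitialVars r) ⊤ := by
  obtain ⟨M, -, a, rfl⟩ := hr
  refine ⟨M, fun j => if h : j < k then a ⟨j, h⟩ else Classical.arbitrary M,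
    forall_mem_onInitialVars_iff.2 fun φ hφ => ?_, Formula.realize_top.2 trivial⟩
  rwa [show (fun j => if h : j < k then a ⟨j, h⟩ else Classical.arbitrary M) ∘ Fin.val = a from
    funext fun i => dif_pos i.2]

end Henkin

section HenkinSequence

open scoped Classical in
/-- One step of Henkin's construction: either `∀ x₀, φ` is added to `θ`, or a fresh variable becomes
a witness of its negation. The variables below `k` are not fresh. -/
noncomputable def henkinStep (T : L.Theory) {k : ℕ} (r : Set (L.Formula (Fin k)))
    (θ φ : L.Formula ℕ) : L.Formula ℕ :=
  if ConsistentWith T (onInitialVars r) (θ ⊓ allZero φ) then θ ⊓ allZero φ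
  else θ ⊓ (instZero (k + fmlCode θ + fmlCode φ + 1) φ).not

/-- Henkin's construction, for the formulas of the sequence `e`. -/
noncomputable def henkinSeq (T : L.Theory) {k : ℕ} (r : Set (L.Formula (Fin k)))
    (e : ℕ → L.Formula ℕ) : ℕ → L.Formula ℕ
  | 0 => ⊤
  | s + 1 => henkinStep T r (henkinSeq T r e s) (e s)

variable {T : L.Theory} {k : ℕ} {r : Set (L.Formula (Fin k))}

theorem ConsistentWith.inf_instZero_not {θ φ : L.Formula ℕ}
    (hθ : ConsistentWith T (onInitialVars r) θ)
    (hφ : ¬ ConsistentWith T (onInitialVars r) (θ ⊓ allZero φ)) {j : ℕ} (hk : k ≤ j)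
    (hjθ : fmlCode θ < j) (hjφ : fmlCode φ ≤ j) :
    ConsistentWith T (onInitialVars r) (θ ⊓ (instZero j φ).not) := by
  obtain ⟨M, v, hr, hv⟩ := hθ
  obtain ⟨x, hx⟩ : ∃ x, ¬ φ.Realize (consSeq x v) := by
    by_contra! hall
    exact hφ ⟨M, v, hr, Formula.realize_inf.2 ⟨hv, realize_allZero.2 hall⟩⟩
  let w : ℕ → M := Function.update v j x
  have hw : ∀ i, i < j → w i = v i := fun i hi => Function.update_of_ne hi.ne _ _
  refine ⟨M, w, forall_mem_onInitialVars_iff.2 ?_, Formula.realize_inf.2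
    ⟨(realize_congr_of_le_fmlCode fun i hi => hw i (hi.trans_lt hjθ)).2 hv,
      Formula.realize_not.2 fun h => hx ?_⟩⟩
  · rw [show w ∘ Fin.val = v ∘ (Fin.val : Fin k → ℕ) from
      funext fun i => hw i (i.2.trans_le hk)]
    exact forall_mem_onInitialVars_iff.1 hr
  · rw [realize_instZero, show w j = x from Function.update_self ..] at h
    refine (realize_congr_of_le_fmlCode fun i hi => ?_).1 h
    cases i with
    | zero => rfl
    | succ i => exact hw i ((Nat.lt_of_succ_le hi).trans_le hjφ)

theorem consistentWith_henkinStep {θ φ : L.Formula ℕ}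
    (hθ : ConsistentWith T (onInitialVars r) θ) :
    ConsistentWith T (onInitialVars r) (henkinStep T r θ φ) := by
  unfold henkinStep
  split_ifs with h
  · exact h
  · exact hθ.inf_instZero_not h (by omega) (by omega) (by omega)

theorem realize_of_realize_henkinStep {θ φ : L.Formula ℕ} {M : Type} [L.Structure M] {v : ℕ → M}
    (h : (henkinStep T r θ φ).Realize v) : θ.Realize v := by
  unfold henkinStep at h
  split_ifs at h
  exacts [(Formula.realize_inf.1 h).1, (Formula.realize_inf.1 h).1]

theorem consistentWith_henkinSeq (hr : ConsistentWith T (onInitialVars r) ⊤) (e : ℕ → L.Formula ℕ)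
    (s : ℕ) : ConsistentWith T (onInitialVars r) (henkinSeq T r e s) := by
  induction s with
  | zero => exact hr
  | succ s ih => exact consistentWith_henkinStep ih

theorem realize_allZero_iff_of_realize_henkinStep {θ φ : L.Formula ℕ} {M : Mdl T} {v : ℕ → M}
    (hr : ∀ γ ∈ onInitialVars r, γ.Realize v) (hθ : (henkinStep T r θ φ).Realize v) :
    (allZero φ).Realize v ↔ ConsistentWith T (onInitialVars r) (θ ⊓ allZero φ) := by
  refine ⟨fun h => ⟨M, v, hr,
    Formula.realize_inf.2 ⟨realize_of_realize_henkinStep hθ, h⟩⟩, fun h => ?_⟩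
  rw [henkinStep, if_pos h] at hθ
  exact (Formula.realize_inf.1 hθ).2

theorem realize_consSeq_of_realize_henkinStep {θ φ : L.Formula ℕ} {M : Type} [L.Structure M]
    {v : ℕ → M} (hθ : (henkinStep T r θ φ).Realize v)
    (h : ∀ j, φ.Realize (consSeq (v j) v)) (x : M) : φ.Realize (consSeq x v) := by
  unfold henkinStep at hθ
  split_ifs at hθ
  · exact realize_allZero.1 (Formula.realize_inf.1 hθ).2 x
  · exact absurd (realize_instZero.2 (h _)) (Formula.realize_not.1 (Formula.realize_inf.1 hθ).2)

end HenkinSequence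

section DecidableHenkin

variable {A : Type} [Primcodable A]

/-- The formula in the free variables `Fin k` expressing that `φ` holds for all values of its
variables other than the first `k`. -/
def closureOver (k : ℕ) (φ : L.Formula ℕ) : L.Formula (Fin k) :=
  (BoundedFormula.relabel (fun j => if h : j < k then .inl ⟨j, h⟩
    else .inr (Fin.ofNat (fmlCode φ + 1) j) : ℕ → Fin k ⊕ Fin (fmlCode φ + 1)) φ).alls

theorem realize_closureOver {k : ℕ} {φ : L.Formula ℕ} {M : Type} [L.Structure M] {a : Fin k → M} :
    (closureOver k φ).Realize a ↔ ∀ v : ℕ → M, v ∘ Fin.val = a → φ.Realize v := by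
  refine BoundedFormula.realize_alls.trans ?_
  simp only [realize_boundedFormula_relabel]
  constructor
  · rintro h v rfl
    refine (realize_congr_of_le_fmlCode fun j hj => ?_).1 (h (v ∘ Fin.val))
    by_cases hjk : j < k
    · simp only [Function.comp_apply, dif_pos hjk, Sum.elim_inl]
    · simp only [Function.comp_apply, dif_neg hjk, Sum.elim_inr, Fin.val_ofNat,
        Nat.mod_eq_of_lt (Nat.lt_succ_of_le hj)]
  · refine fun h x => h _ (funext fun i => ?_)
    simp only [Function.comp_apply, dif_pos i.2, Sum.elim_inl]

theorem consistentWith_onInitialVars_iff {T : L.Theory} {k : ℕ} {r : Set (L.Formula (Fin k))}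
    (hr : IsTypeOf T r) {φ : L.Formula ℕ} :
    ConsistentWith T (onInitialVars r) φ ↔ closureOver k φ.not ∉ r := by
  constructor
  · rintro ⟨M, v, hv, hφ⟩ hmem
    exact Formula.realize_not.1
      (realize_closureOver.1 (forall_mem_onInitialVars_iff.1 hv _ hmem) v rfl) hφ
  · obtain ⟨M, -, a, rfl⟩ := hr
    intro hmem
    obtain ⟨v, rfl, hv⟩ : ∃ v : ℕ → M, v ∘ Fin.val = a ∧ ¬ φ.not.Realize v := by
      by_contra! hall
      exact hmem (realize_closureOver.2 hall)
    exact ⟨M, v, forall_mem_onInitialVars_iff.2 fun _ => id,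
      not_not.1 (mt Formula.realize_not.2 hv)⟩

namespace ComputableFamily

theorem closureOver {φ : A → L.Formula ℕ} (hφ : ComputableFamily φ) (k : ℕ) :
    ComputableFamily fun a => closureOver k (φ a) := by
  refine (hφ.relabel hφ.computable_fmlCode Primrec.succ
    (f := fun c j => if j < k then .inl j else .inr (j % (c + 1))) ?_ fun a j => ?_).alls
    (Computable.succ.comp hφ.computable_fmlCode)
  · exact Primrec.ite (Primrec.nat_lt.comp Primrec.snd (Primrec.const k))
      (Primrec.sumInl.comp Primrec.snd)
      (Primrec.sumInr.comp (Primrec.nat_mod.comp Primrec.snd (Primrec.succ.comp Primrec.fst)))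
  · by_cases hj : j < k
    · simp only [Encodable.encode_nat, if_pos hj, dif_pos hj]
      rfl
    · simp only [Encodable.encode_nat, if_neg hj, dif_neg hj]
      rfl

theorem allZero {φ : A → L.Formula ℕ} (hφ : ComputableFamily φ) :
    ComputableFamily fun a => allZero (φ a) :=
  (hφ.relabel (Computable.const ()) (Primrec.const 1)
    (primrec₂_consSeq (Primrec.const (.inr 0)) (Primrec.sumInl.comp₂ Primrec₂.right))
    fun _ j => by cases j <;> rfl).all

theorem instZero {φ : A → L.Formula ℕ} (hφ : ComputableFamily φ) {j : A → ℕ} (hj : Computable j) :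
    ComputableFamily fun a => instZero (j a) (φ a) :=
  hφ.formulaRelabel hj (primrec₂_consSeq Primrec.id Primrec₂.right) fun _ i => by cases i <;> rfl

open scoped Classical in
theorem ite {P : A → Prop} (hP : ComputablePred P) {φ ψ : A → L.Formula ℕ}
    (hφ : ComputableFamily φ) (hψ : ComputableFamily ψ) :
    ComputableFamily fun a => if P a then φ a else ψ a :=
  (Computable.cond hP.decide hφ hψ).of_eq fun a => by
    by_cases h : P a
    · simp only [h, decide_true, cond_true, if_true]
    · simp only [h, decide_false, cond_false, if_false]

theorem of_succ {e : ℕ → L.Formula ℕ} (hcode : ∀ φ, e (fmlCode φ) = φ)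
    (he : ComputableFamily e) {F : ℕ → L.Formula ℕ → L.Formula ℕ}
    (hF : ComputableFamily fun a : ℕ × ℕ => F a.1 (e a.2)) {θ : ℕ → L.Formula ℕ}
    (hθ : ∀ s, θ (s + 1) = F s (θ s)) : ComputableFamily θ := by
  have hθcode : Computable fun s => fmlCode (θ s) :=
    (Computable.nat_rec Computable.id (Computable.const (fmlCode (θ 0)))
      (hF.computable_fmlCode.comp Computable.snd).to₂).of_eq fun s => by
      induction s with
      | zero => rfl
      | succ s ih =>
        refine (congrArg (fun c => fmlCode (F s (e c))) ih).trans ?_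
        rw [hcode, hθ]
  have heθ := he.comp hθcode
  simpa only [hcode] using heθ

end ComputableFamily

variable {T : L.Theory} {k : ℕ} {r : Set (L.Formula (Fin k))}

theorem ComputableFamily.computablePred_consistentWith {φ : A → L.Formula ℕ}
    (hφ : ComputableFamily φ) (hr : IsTypeOf T r) (hdec : DecidableOnFamilies r) :
    ComputablePred fun a => ConsistentWith T (onInitialVars r) (φ a) :=
  (hdec (hφ.not.closureOver k)).not.of_eq fun _ => (consistentWith_onInitialVars_iff hr).symm

theorem ComputableFamily.henkinStep {θ φ : A → L.Formula ℕ} (hθ : ComputableFamily θ)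
    (hφ : ComputableFamily φ) (hr : IsTypeOf T r) (hdec : DecidableOnFamilies r) :
    ComputableFamily fun a => henkinStep T r (θ a) (φ a) := by
  have hfresh : Computable fun a => k + fmlCode (θ a) + fmlCode (φ a) + 1 :=
    Computable.succ.comp (Primrec.nat_add.to_comp.comp (Primrec.nat_add.to_comp.comp
      (Computable.const k) hθ.computable_fmlCode) hφ.computable_fmlCode)
  have hall := hθ.inf hφ.allZero
  exact .ite (hall.computablePred_consistentWith hr hdec) hall
    (hθ.inf (hφ.instZero hfresh).not)

theorem ComputableFamily.henkinSeq {e : ℕ → L.Formula ℕ} (hcode : ∀ φ, e (fmlCode φ) = φ)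
    (he : ComputableFamily e) (hr : IsTypeOf T r) (hdec : DecidableOnFamilies r) :
    ComputableFamily (henkinSeq T r e) :=
  .of_succ hcode he (F := fun s θ => PaperAL.henkinStep T r θ (e s))
    ((he.comp Computable.snd).henkinStep (he.comp Computable.fst) hr hdec) fun _ => rfl

theorem exists_decidableSet_realize (hr : IsTypeOf T r) (hdec : DecidableOnFamilies r)
    (huniv : DecidableSet (Set.univ : Set (L.Formula ℕ))) :
    ∃ (M : Mdl T) (v : ℕ → M), (∀ φ ∈ r, φ.Realize (v ∘ Fin.val)) ∧
      L.MeetsDefinable (Set.range v) ∧ DecidableSet {φ : L.Formula ℕ | φ.Realize v} := by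
  obtain ⟨e, he, -, hcode⟩ := huniv.exists_enumeration ⟨⊤, trivial⟩
  replace hcode := fun φ => hcode φ trivial
  obtain ⟨M, -, v, hvr, hv⟩ := exists_countable_realize_of_antitone
    (fun s M v => realize_of_realize_henkinStep)
    (consistentWith_henkinSeq (consistentWith_onInitialVars_top hr) e)
  have hstep : ∀ φ, (henkinStep T r (henkinSeq T r e (fmlCode φ)) φ).Realize v := fun φ => by
    have h := hv (fmlCode φ + 1)
    rwa [henkinSeq, hcode] at h
  refine ⟨M, v, forall_mem_onInitialVars_iff.1 hvr, meetsDefinable_range fun φ =>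
    realize_consSeq_of_realize_henkinStep (hstep φ), DecidableOnFamilies.decidableSet ?_ huniv⟩
  intro A _ φ hφ
  have hshift : ComputableFamily fun a => (φ a).relabel Nat.succ :=
    hφ.formulaRelabel (Computable.const ()) (Primrec.succ.comp₂ Primrec₂.right) fun _ _ => rfl
  refine ((((he.henkinSeq hcode hr hdec).comp hshift.computable_fmlCode).inf
    hshift.allZero).computablePred_consistentWith hr hdec).of_eq fun a => ?_
  exact (realize_allZero_iff_of_realize_henkinStep hvr (hstep _)).symm.trans
    realize_allZero_relabel_succ

theorem exists_decidableModel_realizes (hr : IsTypeOf T r) (hdec : DecidableOnFamilies r)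
    (huniv : DecidableSet (Set.univ : Set (L.Formula ℕ))) :
    ∃ M : Mdl T, Countable M ∧ DecidableModel (L := L) M ∧ Realizes M r := by
  obtain ⟨M, v, hvr, hv, hdecv⟩ := exists_decidableSet_realize hr hdec huniv
  let S := hv.toElementarySubstructure
  have hS : (S : Set M) = Set.range v := hv.closure_eq_self
  let g : ℕ → S := fun j => ⟨v j, hS.ge ⟨j, rfl⟩⟩
  have hg : Function.Surjective g := fun ⟨x, hx⟩ =>
    (hS.le hx).imp fun _ hj => Subtype.ext hj
  have hgv : ∀ {α : Type} (φ : L.Formula α) (i : α → ℕ),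
      φ.Realize (g ∘ i) ↔ φ.Realize (v ∘ i) := fun φ i => (S.subtype.map_formula φ (g ∘ i)).symm
  refine ⟨⟨S⟩, hg.countable, ⟨g, hg, hdecv.of_eq fun c => ?_⟩, g ∘ Fin.val,
    typeOf_eq_of_forall_realize hr fun φ hφ => (hgv φ _).2 (hvr φ hφ)⟩
  exact exists_congr fun φ => and_congr_right' (hgv φ id).symm

end DecidableHenkin

section TwoTypes

theorem exists_isTypeOf_relabel_mem {T : L.Theory} (hT : T.IsComplete) (hsmall : IsSmall T)
    {n m : ℕ} {p : Set (L.Formula (Fin n))} {q : Set (L.Formula (Fin m))} (hp : IsTypeOf T p)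
    (hq : IsTypeOf T q) (hpdec : DecidableType p) (hqdec : DecidableType q) :
    ∃ r : Set (L.Formula (Fin (n + m))), IsTypeOf T r ∧ DecidableOnFamilies r ∧
      (∀ φ ∈ p, φ.relabel (Fin.castAdd m) ∈ r) ∧ ∀ φ ∈ q, φ.relabel (Fin.natAdd n) ∈ r := by
  obtain ⟨M, -, ⟨a, rfl⟩, b, rfl⟩ := exists_countable_realizes_and_realizes hT hp hq
  have hpdec : DecidableSet (typeOf M a) := hpdec
  have hqdec : DecidableSet (typeOf M b) := hqdec
  obtain ⟨d, hd, hda, hd_code⟩ := hpdec.exists_enumeration ⟨⊤, Formula.realize_top.2 trivial⟩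
  obtain ⟨e, he, heb, he_code⟩ := hqdec.exists_enumeration ⟨⊤, Formula.realize_top.2 trivial⟩
  let γ : ℕ → L.Formula (Fin (n + m)) := fun s =>
    (d s).relabel (Fin.castAdd m) ⊓ (e s).relabel (Fin.natAdd n)
  have hγ : ComputableFamily γ :=
    (hd.formulaRelabel (Computable.const ()) Primrec₂.right (g := fun _ => Fin.castAdd m)
      fun _ _ => rfl).inf
      (he.formulaRelabel (Computable.const ()) (Primrec.nat_add.comp₂ (Primrec₂.const n)
        Primrec₂.right) (g := fun _ => Fin.natAdd n) fun _ _ => rfl)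
  have hcon : ConsistentWith T (Set.range γ) ⊤ := by
    refine ⟨M, Fin.append a b, ?_, Formula.realize_top.2 trivial⟩
    rintro _ ⟨s, rfl⟩
    refine Formula.realize_inf.2 ⟨Formula.realize_relabel.2 ?_, Formula.realize_relabel.2 ?_⟩
    · rw [show Fin.append a b ∘ Fin.castAdd m = a from funext (Fin.append_left a b)]
      exact hda s
    · rw [show Fin.append a b ∘ Fin.natAdd n = b from funext (Fin.append_right a b)]
      exact heb s
  obtain ⟨r, hr, hγr, hrdec⟩ :=
    exists_isTypeOf_decidableOnFamilies hT hsmall hp hpdec.decidableOnFamilies hγ hcon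
  refine ⟨r, hr, hrdec, fun φ hφ => ?_, fun φ hφ => ?_⟩ <;> obtain ⟨K, -, c, rfl⟩ := hr
  · exact hd_code φ hφ ▸ (Formula.realize_inf.1 (hγr ⟨fmlCode φ, rfl⟩)).1
  · exact he_code φ hφ ▸ (Formula.realize_inf.1 (hγr ⟨fmlCode φ, rfl⟩)).2

end TwoTypes

theorem two_types_realized_in_one_model_general
    (T : L.Theory) (hcomp : T.IsComplete)
    {n m : ℕ} (p : Set (L.Formula (Fin n))) (q : Set (L.Formula (Fin m)))
    (hp : IsTypeOf T p) (hq : IsTypeOf T q) :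
    (∃ M : Mdl T, Countable M ∧ Realizes M p ∧ Realizes M q) ∧
    (IsSmall T → DecidableType p → DecidableType q →
      ∃ M : Mdl T, Countable M ∧ DecidableModel (L := L) M ∧
        Realizes M p ∧ Realizes M q) := by
  refine ⟨exists_countable_realizes_and_realizes hcomp hp hq, fun hsmall hpdec hqdec => ?_⟩
  obtain ⟨r, hr, hrdec, hpr, hqr⟩ := exists_isTypeOf_relabel_mem hcomp hsmall hp hq hpdec hqdec
  obtain ⟨M, hM, hMdec, hMr⟩ :=
    exists_decidableModel_realizes hr hrdec (decidableSet_univ_of_isTypeOf hp hpdec)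
  exact ⟨M, hM, hMdec, hMr.of_relabel hp hpr, hMr.of_relabel hq hqr⟩

/-- Any two types of a small theory are realized together in some
countable model; if moreover the theory is a decidable AL theory and both types are
decidable, the model can be chosen decidable. -/
theorem two_types_realized_in_one_model
    (T : L.Theory) (hcomp : T.IsComplete) (hsmall : IsSmall T)
    {n m : ℕ} (p : Set (L.Formula (Fin n))) (q : Set (L.Formula (Fin m)))
    (hp : IsTypeOf T p) (hq : IsTypeOf T q) :
    (∃ M : Mdl T, Countable M ∧ Realizes M p ∧ Realizes M q) ∧
    (IsALTheory T → DecidableTheory T → DecidableType p → DecidableType q →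
      ∃ M : Mdl T, Countable M ∧ DecidableModel (L := L) M ∧
        Realizes M p ∧ Realizes M q) := by
  obtain ⟨hmodel, hdecidable⟩ := two_types_realized_in_one_model_general T hcomp p q hp hq
  exact ⟨hmodel, fun _ _ => hdecidable hsmall⟩

end PaperAL
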